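/- arXiv:2503.05396 — 5 statements merged into one kernel-verified Lean document; each statement's English description precedes it below -/
import Mathlib

section
/- Let d > 1 be an integer and let χ be a primitive quadratic Dirichlet character modulo d. For an integer n ≥ 1 and a real T ≥ 1 set λ^♭(n,T) = Σ_{c | n, c > T} χ(c). Let δ ∈ (0,1) and let f : ℝ → ℝ be a smooth function supported in [1,2] with |f^{(J)}(u)| ≤ C_J δ^{-J} for all J ≥ 0. Then for every ε > 0 there is a constant C (depending only on ε and the constants C_J) such that for all N > 1, every positive integer q, every T ≥ 1 and every ν ∈ (0, δ): |Σ_{n ≥ 1} f(n/N) λ^♭(qn, T)| ≤ C ( ν^{-1} (q N / T) d^{1/2} (dN)^ε + ν N^{1+ε} ). -/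
/-!
Write `q n = c m`, so that the condition `c > T` forces `m < 2 q N / T` on the support of
`f (n / N)`.  For fixed `m`, put `m = g m'`, `q = g q'` with `g = gcd (m, q)`; then `n = m' b` and
`c = q' b`, and the inner sum is `χ q' * ∑ b, f (m' b / N) χ b` over `b > T / q'`
(`norm_inner_sum_le`).  The weight `b ↦ f (m' b / N)` has total variation `O(δ⁻¹)` independently
of `m'` and `N`, so summation by parts reduces the inner sum to incomplete character sums, which
the Pólya–Vinogradov inequality bounds by `√d (1 + log d)` (`polya_vinogradov`).  Summing over
the at most `2 q N / T` values of `m` gives `O(δ⁻¹ (q N / T) √d (1 + log d))`.  As `ν < δ` and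
`log d ≪ d ^ ε`, this is already dominated by the first term of the claimed bound.
-/

section

open Finset

/-! ### The Pólya–Vinogradov inequality -/

/-- A primitive quadratic `χ` satisfies `𝓕 χ k = χ (-k) τ(χ)`, so Fourier inversion at `1` reads
`τ(χ) ^ 2 = d χ(-1)`. -/
lemma gaussSum_norm_sq {d : ℕ} [NeZero d] {χ : DirichletCharacter ℂ d}
    (hp : χ.IsPrimitive) (hq : MulChar.IsQuadratic χ) :
    ‖gaussSum χ ZMod.stdAddChar‖ ^ 2 = d := by
  set τ := gaussSum χ ZMod.stdAddChar with hτ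
  have h1 : ∀ k, ZMod.dft χ k = χ (-k) * τ := fun k => by
    rw [hp.fourierTransform_eq_inv_mul_gaussSum, hq.inv]
  have h2 : ZMod.dft (ZMod.dft χ) 1 = τ * τ := by
    have : ZMod.dft (χ : ZMod d → ℂ) = fun k => χ (-k) * τ := funext h1
    rw [this, ZMod.dft_mul_const, ZMod.dft_comp_neg]
    simp only [h1, neg_neg, map_one, one_mul]
  rw [ZMod.dft_dft] at h2
  have h3 : ‖χ (-1)‖ = 1 := by simpa using DirichletCharacter.unit_norm_eq_one χ (-1)
  rw [sq, ← norm_mul, ← h2, norm_smul, h3]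
  simp

lemma norm_stdAddChar_sub_one {d : ℕ} [NeZero d] (a : ZMod d) :
    ‖(ZMod.stdAddChar a : ℂ) - 1‖ = 2 * Real.sin (Real.pi * a.val / d) := by
  have hd : (0 : ℝ) < d := by exact_mod_cast NeZero.pos d
  have h1 : (ZMod.stdAddChar a : ℂ) =
      Complex.exp (Complex.I * ((2 * Real.pi * a.val / d : ℝ) : ℂ)) := by
    have := ZMod.stdAddChar_coe (N := d) (a.val : ℤ)
    rw [Int.cast_natCast, ZMod.natCast_zmod_val] at this
    rw [this]
    congr 1
    push_cast
    ring
  rw [h1, Complex.norm_exp_I_mul_ofReal_sub_one, Real.norm_eq_abs, abs_of_nonneg]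
  · congr 2; ring
  · have hle : (a.val : ℝ) ≤ d := by exact_mod_cast (ZMod.val_lt a).le
    refine mul_nonneg zero_le_two (Real.sin_nonneg_of_nonneg_of_le_pi (by positivity) ?_)
    rw [div_div, div_le_iff₀ (by positivity)]
    nlinarith [Real.pi_pos]

/-- The left side bounds the geometric sums `∑ b < M, e(a b / d)`; it is at most
`d / (2 min (k, d - k))` with `k = a.val`, because `sin (π x) ≥ 2 x` on `[0, 1/2]`. -/
lemma two_div_norm_stdAddChar_sub_one_le {d : ℕ} [NeZero d] {a : ZMod d} (ha : a ≠ 0) :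
    2 / ‖(ZMod.stdAddChar a : ℂ) - 1‖ ≤ d / 2 * ((a.val : ℝ)⁻¹ + ((d : ℝ) - a.val)⁻¹) := by
  have hd : (0 : ℝ) < d := by exact_mod_cast NeZero.pos d
  have hk : (0 : ℝ) < a.val := by exact_mod_cast ZMod.val_pos.mpr ha
  have hkd : (0 : ℝ) < d - a.val := by
    rw [sub_pos]; exact_mod_cast ZMod.val_lt a
  have key : ∀ x : ℝ, 0 < x → x ≤ d / 2 → 2 * x / d ≤ Real.sin (Real.pi * x / d) := by
    intro x hx hxd
    have := Real.mul_le_sin (x := Real.pi * x / d) (by positivity)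
      (by rw [div_le_div_iff₀ hd two_pos]; nlinarith [Real.pi_pos])
    refine le_trans (le_of_eq ?_) this
    field_simp
  have fin : ∀ x : ℝ, 0 < x → x ≤ d / 2 → ∀ s : ℝ, s = Real.sin (Real.pi * x / d) →
      2 / (2 * s) ≤ d / 2 * x⁻¹ := by
    rintro x hx hxd s rfl
    have h := key x hx hxd
    calc 2 / (2 * Real.sin (Real.pi * x / d)) ≤ 2 / (2 * (2 * x / d)) := by gcongr
      _ = d / 2 * x⁻¹ := by field_simp
  rw [norm_stdAddChar_sub_one]
  rcases le_total (a.val : ℝ) (d / 2) with h | h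
  · refine (fin _ hk h _ rfl).trans ?_
    gcongr
    simpa using hkd.le
  · refine (fin (d - a.val) hkd (by linarith) _ ?_).trans ?_
    -- `sin (π k / d)` is invariant under `k ↦ d - k`
    · rw [← Real.sin_pi_sub]; congr 1; field_simp
    · gcongr
      simpa using hk.le

/-- The term `a = 0` contributes `1 / 2`, since `0⁻¹ = 0`; with it the two halves are the harmonic
sums `H_{d-1}` and `H_d`. -/
lemma sum_inv_bound (d : ℕ) [NeZero d] :
    ∑ a : ZMod d, (d : ℝ) / 2 * ((a.val : ℝ)⁻¹ + ((d : ℝ) - a.val)⁻¹) ≤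
      d * (1 + Real.log d) := by
  obtain ⟨n, rfl⟩ : ∃ n, d = n + 1 := Nat.exists_eq_succ_of_ne_zero (NeZero.ne d)
  have h0 : ∑ a : ZMod (n + 1), (((n + 1 : ℕ) : ℝ)) / 2 *
      ((a.val : ℝ)⁻¹ + (((n + 1 : ℕ) : ℝ) - a.val)⁻¹) =
      ∑ k ∈ range (n + 1), (((n + 1 : ℕ) : ℝ)) / 2 *
      ((k : ℝ)⁻¹ + (((n + 1 : ℕ) : ℝ) - k)⁻¹) :=
    Fin.sum_univ_eq_sum_range (fun k : ℕ => (((n + 1 : ℕ) : ℝ)) / 2 *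
      ((k : ℝ)⁻¹ + (((n + 1 : ℕ) : ℝ) - k)⁻¹)) (n + 1)
  have hH : ∑ k ∈ range (n + 1), (((k + 1 : ℕ) : ℝ))⁻¹ ≤ 1 + Real.log (n + 1 : ℕ) := by
    refine le_trans (le_of_eq ?_) (harmonic_le_one_add_log (n + 1))
    simp [harmonic]
  have h1 : ∑ k ∈ range (n + 1), ((k : ℝ))⁻¹ ≤ 1 + Real.log (n + 1 : ℕ) := by
    refine le_trans ?_ hH
    rw [sum_range_succ', sum_range_succ]
    simp only [Nat.cast_zero, inv_zero]
    gcongr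
    positivity
  have h2 : ∑ k ∈ range (n + 1), (((n + 1 : ℕ) : ℝ) - k)⁻¹ ≤ 1 + Real.log (n + 1 : ℕ) := by
    refine le_trans (le_of_eq ?_) hH
    rw [← sum_range_reflect]
    refine sum_congr rfl fun k hk => ?_
    have := mem_range.mp hk
    rw [Nat.add_sub_cancel, Nat.cast_sub (by omega)]
    push_cast; ring
  rw [h0, ← mul_sum, sum_add_distrib]
  have : (0 : ℝ) ≤ ((n + 1 : ℕ) : ℝ) / 2 := by positivity
  nlinarith

/-- **Pólya–Vinogradov** for primitive quadratic characters: expand `χ b` through its Gauss sum and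
sum the resulting geometric series in `b`. -/
lemma polya_vinogradov {d : ℕ} (hd : 1 < d) {χ : DirichletCharacter ℂ d}
    (hp : χ.IsPrimitive) (hq : MulChar.IsQuadratic χ) (M : ℕ) :
    ‖∑ b ∈ range M, χ (b : ZMod d)‖ ≤ (d : ℝ) ^ ((1 : ℝ) / 2) * (1 + Real.log d) := by
  have : NeZero d := ⟨by omega⟩
  have : Fact (1 < d) := ⟨hd⟩
  set τ := gaussSum χ ZMod.stdAddChar with hτ
  have hd0 : (0 : ℝ) < d := by positivity
  have hnorm : ‖τ‖ = (d : ℝ) ^ ((1 : ℝ) / 2) := by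
    rw [← Real.sqrt_eq_rpow, ← gaussSum_norm_sq hp hq, Real.sqrt_sq (norm_nonneg _)]
  have hexp : (∑ b ∈ range M, χ (b : ZMod d)) * τ =
      ∑ a : ZMod d, χ a * ∑ b ∈ range M, (ZMod.stdAddChar a : ℂ) ^ b := by
    simp_rw [sum_mul, mul_sum]
    rw [sum_comm]
    refine sum_congr rfl fun b _ => ?_
    have h := gaussSum_mulShift_of_isPrimitive (ZMod.stdAddChar (N := d)) hp (b : ZMod d)
    rw [hq.inv] at h
    rw [hτ, ← h, gaussSum]
    refine sum_congr rfl fun a _ => ?_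
    rw [AddChar.mulShift_apply, ← AddChar.map_nsmul_eq_pow, nsmul_eq_mul]
  have hterm : ∀ a : ZMod d, ‖χ a * ∑ b ∈ range M, (ZMod.stdAddChar a : ℂ) ^ b‖ ≤
      d / 2 * ((a.val : ℝ)⁻¹ + ((d : ℝ) - a.val)⁻¹) := by
    intro a
    by_cases ha : a = 0
    · subst ha
      simp only [MulChar.map_zero, zero_mul, norm_zero, ZMod.val_zero, Nat.cast_zero]
      simp only [inv_zero, sub_zero, zero_add]
      positivity
    · refine le_trans ?_ (two_div_norm_stdAddChar_sub_one_le ha)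
      have hne : (ZMod.stdAddChar a : ℂ) ≠ 1 := by
        intro h
        exact ha (ZMod.injective_stdAddChar (by rw [h, AddChar.map_zero_eq_one]))
      have hn1 : ‖(ZMod.stdAddChar a : ℂ)‖ = 1 := by
        rw [ZMod.stdAddChar_apply]; exact Circle.norm_coe _
      rw [geom_sum_eq hne, norm_mul, norm_div]
      have h2 : ‖(ZMod.stdAddChar a : ℂ) ^ M - 1‖ ≤ 2 := by
        refine (norm_sub_le _ _).trans ?_
        rw [norm_pow, hn1]; norm_num
      calc _ ≤ 1 * (2 / ‖(ZMod.stdAddChar a : ℂ) - 1‖) := by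
            gcongr
            exact DirichletCharacter.norm_le_one χ a
        _ = _ := one_mul _
  have hle : ‖∑ b ∈ range M, χ (b : ZMod d)‖ * ‖τ‖ ≤ d * (1 + Real.log d) := by
    rw [← norm_mul, hexp]
    exact (norm_sum_le _ _).trans ((sum_le_sum fun a _ => hterm a).trans (sum_inv_bound d))
  have hsq : (d : ℝ) = (d : ℝ) ^ ((1 : ℝ) / 2) * (d : ℝ) ^ ((1 : ℝ) / 2) := by
    rw [← Real.rpow_add hd0]; norm_num
  rw [hnorm] at hle
  have hpos : 0 < (d : ℝ) ^ ((1 : ℝ) / 2) := by positivity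
  refine le_of_mul_le_mul_right (hle.trans (le_of_eq ?_)) hpos
  nth_rw 1 [hsq]
  ring

/-! ### Weighted and truncated character sums -/

/-- Abel summation, with the variation of the weight `w` controlled by the increments of a
majorant `F`. -/
lemma norm_sum_mul_le_of_partial_sums {w F : ℕ → ℝ} {u : ℕ → ℂ} {V P : ℝ}
    (hP : ∀ n, ‖∑ i ∈ range n, u i‖ ≤ P) (hw : ∀ i, |w i| ≤ V)
    (hF : ∀ i, |w (i + 1) - w i| ≤ F (i + 1) - F i) (hV : ∀ n, F n - F 0 ≤ V) (n : ℕ) :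
    ‖∑ i ∈ range n, (w i : ℂ) * u i‖ ≤ 2 * V * P := by
  have hP0 : 0 ≤ P := (norm_nonneg _).trans (hP 0)
  have h := sum_range_by_parts (fun i => (w i : ℂ)) u n
  simp only [smul_eq_mul] at h
  rw [h]
  have h1 : ‖(w (n - 1) : ℂ) * ∑ i ∈ range n, u i‖ ≤ V * P := by
    rw [norm_mul, Complex.norm_real, Real.norm_eq_abs]
    exact mul_le_mul (hw _) (hP _) (norm_nonneg _) ((abs_nonneg _).trans (hw 0))
  have h2 : ‖∑ i ∈ range (n - 1), ((w (i + 1) : ℂ) - (w i : ℂ)) * ∑ j ∈ range (i + 1), u j‖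
      ≤ V * P := by
    calc _ ≤ ∑ i ∈ range (n - 1), (F (i + 1) - F i) * P := by
          refine (norm_sum_le _ _).trans (sum_le_sum fun i _ => ?_)
          rw [norm_mul, ← Complex.ofReal_sub, Complex.norm_real, Real.norm_eq_abs]
          exact mul_le_mul (hF i) (hP _) (norm_nonneg _) ((abs_nonneg _).trans (hF i))
      _ = (F (n - 1) - F 0) * P := by rw [← sum_mul, sum_range_sub]
      _ ≤ V * P := mul_le_mul_of_nonneg_right (hV _) hP0
  refine (norm_sub_le _ _).trans ?_
  linarith

/-- The increments of `f` are dominated by those of the bounded monotone function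
`L * max 0 (min x 3)`, so `f` has total variation at most `3 * L` on the line. The clamp goes to
`[0, 3]` rather than `[1, 2]` so that the vanishing of `f` at its ends is immediate from the
support. -/
lemma abs_sub_le_clamp {f : ℝ → ℝ} {L : ℝ} (hf : Differentiable ℝ f)
    (hs : Function.support f ⊆ Set.Icc 1 2) (hL : ∀ u, |deriv f u| ≤ L) {x y : ℝ} (hxy : x ≤ y) :
    |f y - f x| ≤ L * max 0 (min y 3) - L * max 0 (min x 3) := by
  have hz : ∀ x : ℝ, x ∉ Set.Icc (1 : ℝ) 2 → f x = 0 := fun x hx =>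
    Function.notMem_support.mp fun h => hx (hs h)
  have hc : ∀ x : ℝ, f (max 0 (min x 3)) = f x := by
    intro x
    rcases lt_or_ge x 0 with h | h
    · rw [hz x (fun h' => by linarith [h'.1]), min_eq_left (by linarith), max_eq_left h.le,
        hz 0 (by norm_num)]
    · rcases le_or_gt x 3 with h3 | h3
      · rw [min_eq_left h3, max_eq_right h]
      · rw [hz x (fun h' => by linarith [h'.2]), min_eq_right h3.le, max_eq_right (by norm_num),
          hz 3 (by norm_num)]
  have h := Convex.norm_image_sub_le_of_norm_deriv_le (f := f) (C := L) (s := Set.univ)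
    (x := max 0 (min x 3)) (y := max 0 (min y 3))
    (fun x _ => hf x) (fun x _ => hL x) convex_univ trivial trivial
  rw [hc, hc, Real.norm_eq_abs, Real.norm_eq_abs, abs_of_nonneg (a := max 0 (min y 3) - _)
    (sub_nonneg.mpr (by gcongr)), mul_sub] at h
  exact h

lemma norm_truncated_sum_le {d : ℕ} {χ : DirichletCharacter ℂ d} {Q : ℝ}
    (hQ : ∀ M : ℕ, ‖∑ b ∈ range M, χ (b : ZMod d)‖ ≤ Q) {r : ℕ} (hr : 0 < r) {T : ℝ}
    (hT : 0 ≤ T) (M : ℕ) :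
    ‖∑ b ∈ range M, (if T < ((r * b : ℕ) : ℝ) then χ (b : ZMod d) else 0)‖ ≤ 2 * Q := by
  have h1 : ∑ b ∈ range M, χ (b : ZMod d) =
      ∑ b ∈ range M, (if T < ((r * b : ℕ) : ℝ) then χ (b : ZMod d) else 0) +
      ∑ b ∈ range (min M (⌊T / r⌋₊ + 1)), χ (b : ZMod d) := by
    rw [← sum_filter, ← sum_filter_add_sum_filter_not (range M) (fun b => T < ((r * b : ℕ) : ℝ))]
    congr 2
    ext b
    have hr' : (0 : ℝ) < r := by exact_mod_cast hr
    rw [mem_filter, mem_range, mem_range, lt_min_iff, Nat.lt_succ_iff,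
      Nat.le_floor_iff (by positivity), le_div_iff₀ hr', not_lt, Nat.cast_mul, mul_comm (b : ℝ)]
  rw [eq_sub_of_add_eq h1.symm]
  exact (norm_sub_le _ _).trans (by linarith [hQ M, hQ (min M (⌊T / r⌋₊ + 1))])

/-- The contribution of one complementary divisor `m`. The condition `M ≤ n → f (n / N) = 0` makes
`range M` exhaust both the sum over `n` and the sum over `b = n / m'`. -/
lemma norm_inner_sum_le {d : ℕ} {χ : DirichletCharacter ℂ d} {Q : ℝ}
    (hQ : ∀ M : ℕ, ‖∑ b ∈ range M, χ (b : ZMod d)‖ ≤ Q)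
    {f : ℝ → ℝ} {L : ℝ} (hf : Differentiable ℝ f)
    (hs : Function.support f ⊆ Set.Icc 1 2) (hL : ∀ u, |deriv f u| ≤ L)
    {N T : ℝ} (hN : 0 < N) (hT : 0 ≤ T) {q m : ℕ} (hq : 0 < q) (hm : 0 < m)
    {M : ℕ} (hM : ∀ n : ℕ, M ≤ n → f (n / N) = 0) :
    ‖∑ n ∈ range M, (if m ∣ q * n ∧ T < ((q * n / m : ℕ) : ℝ) then
        (f (n / N) : ℂ) * χ ((q * n / m : ℕ) : ZMod d) else 0)‖ ≤ 12 * L * Q := by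
  have hL0 : 0 ≤ L := (abs_nonneg _).trans (hL 0)
  have hQ0 : 0 ≤ Q := (norm_nonneg _).trans (hQ 0)
  obtain ⟨g, m', q', hg, hcop, rfl, rfl⟩ : ∃ g m' q' : ℕ, 0 < g ∧ Nat.Coprime m' q' ∧
      m = m' * g ∧ q = q' * g := Nat.exists_coprime' (Nat.gcd_pos_of_pos_left q hm)
  have hm' : 0 < m' := Nat.pos_of_mul_pos_right hm
  have hq' : 0 < q' := Nat.pos_of_mul_pos_right hq
  have hdvd : ∀ n, m' * g ∣ q' * g * n ↔ m' ∣ n := by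
    intro n
    rw [mul_right_comm, Nat.mul_dvd_mul_iff_right hg, hcop.dvd_mul_left]
  have hdiv : ∀ b, q' * g * (m' * b) / (m' * g) = q' * b := by
    intro b
    rw [show q' * g * (m' * b) = q' * b * (m' * g) by ring]
    exact Nat.mul_div_cancel _ hm
  -- the substitution `n = m' * b`
  have hsub : ∑ n ∈ range M, (if m' * g ∣ q' * g * n ∧ T < ((q' * g * n / (m' * g) : ℕ) : ℝ) then
        (f (n / N) : ℂ) * χ ((q' * g * n / (m' * g) : ℕ) : ZMod d) else 0) =
      χ (q' : ZMod d) * ∑ b ∈ range M, (f ((m' * b : ℕ) / N) : ℂ) *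
        (if T < ((q' * b : ℕ) : ℝ) then χ (b : ZMod d) else 0) := by
    rw [mul_sum]
    symm
    refine sum_bij_ne_zero (fun b _ _ => m' * b) ?_ ?_ ?_ ?_
    · intro b _ hb
      rw [mem_range]
      by_contra hlt
      exact hb (by rw [hM _ (not_lt.mp hlt)]; simp)
    · intro b _ _ b' _ _ h
      exact Nat.eq_of_mul_eq_mul_left hm' h
    · intro n hn hne
      have hdn : m' ∣ n := by
        by_contra h
        exact hne (if_neg fun h' => h ((hdvd n).mp h'.1))
      obtain ⟨b, rfl⟩ := hdn
      have hb : b < M := lt_of_le_of_lt (Nat.le_mul_of_pos_left b hm') (mem_range.mp hn)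
      refine ⟨b, mem_range.mpr hb, ?_, rfl⟩
      intro h0
      apply hne
      rw [hdiv]
      split_ifs with h
      · rw [if_pos h.2] at h0
        rw [← h0]; push_cast; rw [map_mul]; ring
      · rfl
    · intro b _ _
      rw [hdiv]
      by_cases h : T < ((q' * b : ℕ) : ℝ)
      · rw [if_pos h, if_pos ⟨(hdvd _).mpr (dvd_mul_right _ _), h⟩]
        push_cast; rw [map_mul]; ring
      · rw [if_neg h, if_neg (fun h' => h h'.2)]; simp
  have hclamp : ∀ x : ℝ, max 0 (min x 3) ≤ 3 := fun x => max_le (by norm_num) (min_le_right _ _)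
  have hsum := norm_sum_mul_le_of_partial_sums (V := 3 * L)
    (w := fun b => f ((m' * b : ℕ) / N)) (F := fun b => L * max 0 (min ((m' * b : ℕ) / N) 3))
    (norm_truncated_sum_le hQ hq' hT) ?_ ?_ ?_ M
  · rw [hsub, norm_mul]
    refine (mul_le_mul (DirichletCharacter.norm_le_one χ _) hsum (norm_nonneg _)
      zero_le_one).trans (le_of_eq (by ring))
  · intro b
    have h0 : f 0 = 0 := Function.notMem_support.mp fun h => by
      have := (hs h).1; norm_num at this
    have h := abs_sub_le_clamp hf hs hL (x := 0) (y := (m' * b : ℕ) / N) (by positivity)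
    rw [h0, sub_zero] at h
    refine h.trans ?_
    have := mul_le_mul_of_nonneg_left (hclamp ((m' * b : ℕ) / N)) hL0
    have h3 : 0 ≤ L * max 0 (min (0 : ℝ) 3) := by positivity
    linarith
  · intro b
    refine abs_sub_le_clamp hf hs hL ?_
    gcongr
    omega
  · intro n
    have := mul_le_mul_of_nonneg_left (hclamp ((m' * n : ℕ) / N)) hL0
    have h3 : 0 ≤ L * max 0 (min (((m' * 0 : ℕ) : ℝ) / N) 3) := by positivity
    linarith

/-! ### Divisor switching -/

/-- Dirichlet switching `c ↔ k / c`: the large divisors of `k` are complementary to small ones. -/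
lemma sum_divisors_filter_switch {d : ℕ} (χ : DirichletCharacter ℂ d) {k R : ℕ} {T : ℝ}
    (hR : ∀ m : ℕ, m ∣ k → T < ((k / m : ℕ) : ℝ) → m ≤ R) (hk : k ≠ 0) :
    ∑ c ∈ k.divisors.filter (fun c : ℕ => T < (c : ℝ)), χ ((c : ℕ) : ZMod d) =
      ∑ m ∈ Icc 1 R, (if m ∣ k ∧ T < ((k / m : ℕ) : ℝ) then χ ((k / m : ℕ) : ZMod d) else 0) := by
  rw [sum_filter, ← Nat.sum_div_divisors k (fun c => if T < (c : ℝ) then χ (c : ZMod d) else 0),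
    ← sum_filter, ← sum_filter]
  refine sum_congr ?_ fun _ _ => rfl
  ext m
  simp only [mem_filter, Nat.mem_divisors, mem_Icc]
  constructor
  · rintro ⟨⟨h1, -⟩, h2⟩
    exact ⟨⟨Nat.pos_of_dvd_of_pos h1 (Nat.pos_of_ne_zero hk), hR m h1 h2⟩, h1, h2⟩
  · rintro ⟨-, h1, h2⟩
    exact ⟨⟨h1, hk⟩, h2⟩

lemma norm_tsum_le {d : ℕ} {χ : DirichletCharacter ℂ d} {Q : ℝ}
    (hQ : ∀ M : ℕ, ‖∑ b ∈ range M, χ (b : ZMod d)‖ ≤ Q)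
    {f : ℝ → ℝ} {L : ℝ} (hf : Differentiable ℝ f)
    (hs : Function.support f ⊆ Set.Icc 1 2) (hL : ∀ u, |deriv f u| ≤ L)
    {N T : ℝ} (hN : 0 < N) (hT : 0 < T) {q : ℕ} (hq : 0 < q) :
    ‖∑' n : ℕ, (f (n / N) : ℂ) *
        ∑ c ∈ (q * n).divisors.filter (fun c : ℕ => T < (c : ℝ)), χ ((c : ℕ) : ZMod d)‖
      ≤ 24 * L * Q * (q * N / T) := by
  have hL0 : 0 ≤ L := (abs_nonneg _).trans (hL 0)
  have hQ0 : 0 ≤ Q := (norm_nonneg _).trans (hQ 0)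
  set M := ⌊2 * N⌋₊ + 1 with hMdef
  set R := ⌊2 * (q * N / T)⌋₊ with hRdef
  have hM : ∀ n : ℕ, M ≤ n → f (n / N) = 0 := by
    intro n hn
    refine Function.notMem_support.mp fun h => ?_
    have h2 := (hs h).2
    rw [div_le_iff₀ hN] at h2
    have := (Nat.le_floor_iff (by positivity)).mpr h2
    omega
  have hR : ∀ n < M, ∀ m : ℕ, m ∣ q * n → T < ((q * n / m : ℕ) : ℝ) → m ≤ R := by
    intro n hn m hm hlt
    have hn2 : (n : ℝ) ≤ 2 * N := (Nat.le_floor_iff (by positivity)).mp (by omega)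
    rw [hRdef, Nat.le_floor_iff (by positivity)]
    rcases Nat.eq_zero_or_pos m with rfl | hm0
    · rw [Nat.cast_zero]; positivity
    have hm0' : (0 : ℝ) < m := by exact_mod_cast hm0
    rw [Nat.cast_div hm hm0'.ne', lt_div_iff₀ hm0', Nat.cast_mul] at hlt
    rw [← mul_div_assoc, le_div_iff₀ hT]
    have : (q : ℝ) * n ≤ q * (2 * N) := by gcongr
    linarith
  have hfin : ∑' n : ℕ, (f (n / N) : ℂ) *
        ∑ c ∈ (q * n).divisors.filter (fun c : ℕ => T < (c : ℝ)), χ ((c : ℕ) : ZMod d) =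
      ∑ m ∈ Icc 1 R, ∑ n ∈ range M, (if m ∣ q * n ∧ T < ((q * n / m : ℕ) : ℝ) then
        (f (n / N) : ℂ) * χ ((q * n / m : ℕ) : ZMod d) else 0) := by
    rw [tsum_eq_sum (s := range M), sum_comm]
    · refine sum_congr rfl fun n hn => ?_
      rcases Nat.eq_zero_or_pos n with rfl | hn0
      · have h0 : f 0 = 0 := Function.notMem_support.mp fun h => by
          have := (hs h).1; norm_num at this
        simp [h0]
      · rw [sum_divisors_filter_switch χ (hR n (mem_range.mp hn)) (by positivity), mul_sum]
        exact sum_congr rfl fun m _ => by rw [mul_ite, mul_zero]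
    · intro n hn
      rw [hM n (by simpa using hn)]; simp
  rw [hfin]
  calc _ ≤ ∑ m ∈ Icc 1 R, 12 * L * Q := (norm_sum_le _ _).trans (sum_le_sum fun m hm =>
        norm_inner_sum_le hQ hf hs hL hN hT.le hq (mem_Icc.mp hm).1 hM)
    _ = R * (12 * L * Q) := by rw [sum_const, Nat.card_Icc, nsmul_eq_mul, Nat.add_sub_cancel]
    _ ≤ 2 * (q * N / T) * (12 * L * Q) := by
        gcongr
        exact Nat.floor_le (by positivity)
    _ = _ := by ring

end

/-- Let `d > 1` and let `χ` be a primitive quadratic Dirichlet character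
mod `d`.  For `n ≥ 1` and `T ≥ 1` set `λ^♭(n,T) = Σ_{c | n, c > T} χ(c)`.  Let
`δ ∈ (0,1)` and let `f` be a smooth function supported in `[1,2]` with
`|f^{(J)}| ≤ C_J δ^{-J}`.  Then for every `ε > 0` there is `C` (depending only on `ε`
and the `C_J`) such that for all `N > 1`, `q ≥ 1`, `T ≥ 1` and `ν ∈ (0,δ)`:
`|Σ_{n ≥ 1} f(n/N) λ^♭(qn,T)| ≤ C (ν⁻¹ (qN/T) d^{1/2} (dN)^ε + ν N^{1+ε})`. -/
theorem stmt_1 (Cf : ℕ → ℝ) (ε : ℝ) (hε : 0 < ε) :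
    ∃ C : ℝ, 0 < C ∧
      ∀ (d : ℕ), 1 < d →
      ∀ χ : DirichletCharacter ℂ d, χ.IsPrimitive → MulChar.IsQuadratic χ →
      ∀ δ : ℝ, 0 < δ → δ < 1 →
      ∀ f : ℝ → ℝ, ContDiff ℝ (⊤ : ℕ∞) f → Function.support f ⊆ Set.Icc 1 2 →
        (∀ (J : ℕ) (u : ℝ), |iteratedDeriv J f u| ≤ Cf J * δ ^ (-(J : ℝ))) →
      ∀ N : ℝ, 1 < N → ∀ q : ℕ, 1 ≤ q → ∀ T : ℝ, 1 ≤ T → ∀ ν : ℝ, 0 < ν → ν < δ →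
        ‖∑' n : ℕ, (f (n / N) : ℂ) *
            ∑ c ∈ (q * n).divisors.filter (fun c : ℕ => T < (c : ℝ)),
              χ ((c : ℕ) : ZMod d)‖
          ≤ C * (ν⁻¹ * ((q : ℝ) * N / T) * (d : ℝ) ^ ((1 : ℝ) / 2) * ((d : ℝ) * N) ^ ε
              + ν * N ^ ((1 : ℝ) + ε)) := by
  refine ⟨24 * (|Cf 1| + 1) * (1 + 1 / ε), by positivity, ?_⟩
  intro d hd χ hp hq δ hδ _ f hf hs hder N hN q hq1 T hT ν hν hνδ
  have hd1 : (1 : ℝ) ≤ d := by exact_mod_cast hd.le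
  have hL : ∀ u, |deriv f u| ≤ (|Cf 1| + 1) * ν⁻¹ := by
    intro u
    have h := hder 1 u
    rw [iteratedDeriv_one, Nat.cast_one, Real.rpow_neg_one] at h
    have hinv : δ⁻¹ ≤ ν⁻¹ := inv_anti₀ hν hνδ.le
    refine h.trans (mul_le_mul ?_ hinv (by positivity) (by positivity))
    linarith [le_abs_self (Cf 1)]
  have hlog : 1 + Real.log d ≤ (1 + 1 / ε) * ((d : ℝ) * N) ^ ε := by
    have h1 : Real.log d ≤ (d : ℝ) ^ ε / ε := Real.log_le_rpow_div (by positivity) hε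
    have h2 : (d : ℝ) ^ ε ≤ ((d : ℝ) * N) ^ ε :=
      Real.rpow_le_rpow (by positivity) (by nlinarith) hε.le
    have h3 : 1 ≤ (d : ℝ) ^ ε := Real.one_le_rpow hd1 hε.le
    have h4 : (d : ℝ) ^ ε / ε ≤ ((d : ℝ) * N) ^ ε / ε := by gcongr
    calc 1 + Real.log d ≤ ((d : ℝ) * N) ^ ε + ((d : ℝ) * N) ^ ε / ε := by linarith
      _ = _ := by ring
  refine (norm_tsum_le (polya_vinogradov hd hp hq) (hf.differentiable (by simp)) hs hL
    (by linarith) (by linarith) hq1).trans ?_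
  have hN0 : 0 < N := by linarith
  have hT0 : 0 < T := by linarith
  calc _ ≤ 24 * ((|Cf 1| + 1) * ν⁻¹) * ((d : ℝ) ^ ((1 : ℝ) / 2) *
          ((1 + 1 / ε) * ((d : ℝ) * N) ^ ε)) * (q * N / T) := by gcongr
    _ = 24 * (|Cf 1| + 1) * (1 + 1 / ε) *
          (ν⁻¹ * ((q : ℝ) * N / T) * (d : ℝ) ^ ((1 : ℝ) / 2) * ((d : ℝ) * N) ^ ε) := by ring
    _ ≤ _ := by
        gcongr
        exact le_add_of_nonneg_right (by positivity)
end

section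
/- There is an absolute constant C such that the following holds. Let D ≥ 2, let K₁ ≥ D³, and let (β_d) be complex numbers indexed by integers 1 ≤ d ≤ D and supported on squarefree odd d. Then Σ_{K₁ < k ≤ 2K₁} | Σ_{1 ≤ d ≤ D, d squarefree odd} β_d (k/d) |² ≤ C K₁ Σ_{1 ≤ d ≤ D} |β_d|², where (k/d) denotes the Jacobi symbol. -/
/-!
Expanding the square, the left side is `∑_{d₁, d₂} β_{d₁} conj(β_{d₂}) S(d₁, d₂)`, where
`S(d₁, d₂)` is the sum of the Jacobi symbol `(k / d₁d₂)` over `K₁ < k ≤ 2K₁`.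

Since `K₁ ≥ D³`, Poisson summation can be avoided: periodicity suffices. If `d₁ ≠ d₂` are
squarefree and odd, some prime `p` divides exactly one of them, so `k ↦ (k / d₁d₂)` is a
nontrivial character and its sum over a full period of length `d₁d₂ ≤ D²` vanishes
(`sum_jacobi_eq_zero`). Hence `|S(d₁, d₂)| ≤ 2D²` off the diagonal (`abs_sum_Ico_le`), and by
Cauchy–Schwarz these terms contribute at most `2D² (∑ |β_d|)² ≤ 2D³ ∑ |β_d|² ≤ 2K₁ ∑ |β_d|²`.
The diagonal contributes at most `2K₁ ∑ |β_d|²` trivially, which gives the constant `C = 4`.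
-/

/-- Nontriviality of the Jacobi character modulo `p * n`: by the Chinese remainder theorem, take
`a` to be a nonresidue modulo `p` and `1` modulo `n`. -/
lemma exists_jacobi_neg_one (p n : ℕ) (hp : p.Prime) (h2 : p ≠ 2) (hpn : p.Coprime n)
    (hn : n ≠ 0) : ∃ a : ℕ, a.Coprime (p * n) ∧ jacobiSym a (p * n) = -1 := by
  have : Fact p.Prime := ⟨hp⟩
  have : NeZero p := ⟨hp.ne_zero⟩
  obtain ⟨x, hx⟩ := quadraticChar_exists_neg_one (F := ZMod p) (by rwa [ZMod.ringChar_zmod_n])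
  obtain ⟨a, ha1, ha2⟩ := Nat.chineseRemainder hpn x.val 1
  have hleg : jacobiSym a p = -1 := by
    rw [← jacobiSym.legendreSym.to_jacobiSym, legendreSym]
    have : ((a : ℤ) : ZMod p) = x := by
      have := (ZMod.natCast_eq_natCast_iff _ _ _).2 ha1
      rw [ZMod.natCast_zmod_val] at this
      simpa using this
    rw [this, hx]
  have hone : jacobiSym a n = 1 := by
    have h : (a : ℤ) % n = (1 : ℤ) % n := by exact_mod_cast ha2
    rw [jacobiSym.mod_left, h, ← jacobiSym.mod_left, jacobiSym.one_left]
  have : NeZero n := ⟨hn⟩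
  have hJ : jacobiSym a (p * n) = -1 := by rw [jacobiSym.mul_right, hleg, hone]; norm_num
  refine ⟨a, ?_, hJ⟩
  have : NeZero (p * n) := ⟨mul_ne_zero hp.ne_zero hn⟩
  have : jacobiSym a (p * n) ≠ 0 := by rw [hJ]; norm_num
  by_contra hc
  exact this (jacobiSym.eq_zero_iff_not_coprime.2 (by rwa [Int.gcd_natCast_natCast]))

/-- A nontrivial Jacobi character sums to zero over a full period: multiplication by `a`
permutes the residues and negates the sum. -/
lemma sum_jacobi_of_neg_one (q a : ℕ) (hq : q ≠ 0) (ha : a.Coprime q)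
    (hJ : jacobiSym a q = -1) : ∑ k ∈ Finset.range q, jacobiSym k q = 0 := by
  have : NeZero q := ⟨hq⟩
  have hsum : ∑ k ∈ Finset.range q, jacobiSym k q = ∑ x : ZMod q, jacobiSym x.val q := by
    refine Finset.sum_bij' (fun k _ => (k : ZMod q)) (fun x _ => x.val) ?_ ?_ ?_ ?_ ?_
    · simp
    · intro x _; simpa using ZMod.val_lt x
    · intro k hk; exact ZMod.val_cast_of_lt (by simpa using hk)
    · intro x _; simp
    · intro k hk; rw [ZMod.val_cast_of_lt (by simpa using hk)]
  have hneg : ∑ x : ZMod q, jacobiSym x.val q = ∑ x : ZMod q, -jacobiSym x.val q := by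
    rw [← Equiv.sum_comp (Units.mulLeft (ZMod.unitOfCoprime a ha))]
    refine Finset.sum_congr rfl fun x _ => ?_
    have : ((ZMod.val ((a : ZMod q) * x) : ℕ) : ℤ) % q = ((a : ℤ) * x.val) % q := by
      rw [ZMod.val_mul, ZMod.val_natCast]
      push_cast
      simp [Int.mul_emod]
    rw [Units.mulLeft_apply, ZMod.coe_unitOfCoprime, jacobiSym.mod_left, this,
      ← jacobiSym.mod_left, jacobiSym.mul_left, hJ]
    ring
  rw [Finset.sum_neg_distrib] at hneg
  omega

lemma sum_jacobi_of_prime_dvd (d e p : ℕ) (hd : Squarefree d) (hdo : Odd d) (he : e ≠ 0)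
    (hp : p.Prime) (hpd : p ∣ d) (hpe : ¬ p ∣ e) :
    ∑ k ∈ Finset.range (d * e), jacobiSym k (d * e) = 0 := by
  obtain ⟨m, rfl⟩ := hpd
  have hm : m ≠ 0 := by rintro rfl; simp at hd
  have h2 : p ≠ 2 := by
    rintro rfl
    exact absurd hdo (by simp)
  have hpm : p.Coprime m := Nat.coprime_of_squarefree_mul hd
  obtain ⟨a, ha, hJ⟩ := exists_jacobi_neg_one p (m * e) hp h2
    (hpm.mul_right ((Nat.Prime.coprime_iff_not_dvd hp).2 hpe)) (mul_ne_zero hm he)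
  rw [mul_assoc]
  exact sum_jacobi_of_neg_one _ a (mul_ne_zero hp.ne_zero (mul_ne_zero hm he)) ha hJ

/-- Distinct squarefree numbers have different prime divisors, so one of the two orders of
`sum_jacobi_of_prime_dvd` applies. -/
lemma sum_jacobi_eq_zero (d e : ℕ) (hd : Squarefree d) (hdo : Odd d) (he : Squarefree e)
    (heo : Odd e) (hde : d ≠ e) :
    ∑ k ∈ Finset.range (d * e), jacobiSym k (d * e) = 0 := by
  by_contra hne
  refine hde ((Nat.Squarefree.ext_iff hd he).2 fun p hp => ⟨fun h => ?_, fun h => ?_⟩)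
  · by_contra h'
    exact hne (sum_jacobi_of_prime_dvd d e p hd hdo he.ne_zero hp h h')
  · by_contra h'
    rw [mul_comm] at hne
    exact hne (sum_jacobi_of_prime_dvd e d p he heo hd.ne_zero hp h h')

lemma abs_jacobi_le (a : ℤ) (b : ℕ) : |jacobiSym a b| ≤ 1 := by
  rcases jacobiSym.trichotomy a b with h | h | h <;> simp [h]

/-- Complete periods cancel, leaving fewer than `q` terms. -/
lemma abs_sum_range_le (q : ℕ) (hq : q ≠ 0)
    (h0 : ∑ k ∈ Finset.range q, jacobiSym k q = 0) (n : ℕ) :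
    |∑ k ∈ Finset.range n, jacobiSym k q| ≤ q := by
  induction n using Nat.strong_induction_on with
  | _ n ih =>
    by_cases hn : n < q
    · calc |∑ k ∈ Finset.range n, jacobiSym k q|
          ≤ ∑ k ∈ Finset.range n, |jacobiSym k q| := Finset.abs_sum_le_sum_abs _ _
        _ ≤ ∑ k ∈ Finset.range n, 1 := Finset.sum_le_sum fun k _ => abs_jacobi_le _ _
        _ ≤ q := by simp; omega
    · obtain ⟨m, rfl⟩ := Nat.exists_eq_add_of_le (not_lt.1 hn)
      rw [Finset.sum_range_add, h0, zero_add]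
      have : ∀ k : ℕ, jacobiSym ((q + k : ℕ) : ℤ) q = jacobiSym k q := fun k => by
        rw [jacobiSym.mod_left]; push_cast
        rw [Int.add_emod_left, ← jacobiSym.mod_left]
      simp only [this]
      exact ih m (by omega)

lemma abs_sum_Ico_le (q : ℕ) (hq : q ≠ 0)
    (h0 : ∑ k ∈ Finset.range q, jacobiSym k q = 0) (m n : ℕ) (hmn : m ≤ n) :
    |∑ k ∈ Finset.Ico m n, jacobiSym k q| ≤ 2 * q := by
  rw [Finset.sum_Ico_eq_sub _ hmn]
  have h1 := abs_sum_range_le q hq h0 n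
  have h2 := abs_sum_range_le q hq h0 m
  rw [abs_le] at *
  constructor <;> linarith [h1.1, h1.2, h2.1, h2.2]

/-- Expansion of the square: a pointwise bound on the correlations `S(d, e)` bounds the
quadratic form. -/
lemma quadratic_form_le (A B : Finset ℕ) (β : ℕ → ℂ) (J : ℕ → ℕ → ℤ) (M : ℕ → ℕ → ℝ)
    (hM : ∀ d ∈ B, ∀ e ∈ B, |((∑ k ∈ A, J k d * J k e : ℤ) : ℝ)| ≤ M d e) :
    ∑ k ∈ A, ‖∑ d ∈ B, β d * (J k d : ℂ)‖ ^ 2 ≤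
      ∑ d ∈ B, ∑ e ∈ B, ‖β d‖ * ‖β e‖ * M d e := by
  have key : ((∑ k ∈ A, ‖∑ d ∈ B, β d * (J k d : ℂ)‖ ^ 2 : ℝ) : ℂ) =
      ∑ d ∈ B, ∑ e ∈ B, β d * (starRingEnd ℂ) (β e) * ((∑ k ∈ A, J k d * J k e : ℤ) : ℂ) := by
    have : ∀ k ∈ A, ((‖∑ d ∈ B, β d * (J k d : ℂ)‖ ^ 2 : ℝ) : ℂ) =
        ∑ d ∈ B, ∑ e ∈ B, β d * (starRingEnd ℂ) (β e) * ((J k d : ℂ) * (J k e : ℂ)) := by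
      intro k _
      push_cast
      rw [← Complex.mul_conj', map_sum, Finset.sum_mul_sum]
      refine Finset.sum_congr rfl fun d _ => Finset.sum_congr rfl fun e _ => ?_
      rw [map_mul, map_intCast]
      ring
    rw [Complex.ofReal_sum, Finset.sum_congr rfl this, Finset.sum_comm]
    refine Finset.sum_congr rfl fun d _ => ?_
    rw [Finset.sum_comm]
    refine Finset.sum_congr rfl fun e _ => ?_
    push_cast
    rw [Finset.mul_sum]
  calc ∑ k ∈ A, ‖∑ d ∈ B, β d * (J k d : ℂ)‖ ^ 2
      = ‖((∑ k ∈ A, ‖∑ d ∈ B, β d * (J k d : ℂ)‖ ^ 2 : ℝ) : ℂ)‖ := by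
        rw [Complex.norm_real, Real.norm_of_nonneg (Finset.sum_nonneg fun _ _ => by positivity)]
    _ ≤ _ := by
        rw [key]
        refine (norm_sum_le _ _).trans (Finset.sum_le_sum fun d hd => ?_)
        refine (norm_sum_le _ _).trans (Finset.sum_le_sum fun e he => ?_)
        rw [norm_mul, norm_mul, Complex.norm_conj, Complex.norm_intCast]
        exact mul_le_mul_of_nonneg_left (hM d hd e he) (by positivity)

/-- There is an absolute constant `C` such that for all `D ≥ 2`,
`K₁ ≥ D³` and complex numbers `β_d` indexed by `1 ≤ d ≤ D` supported on squarefree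
odd `d`, one has
`Σ_{K₁ < k ≤ 2K₁} |Σ_{1 ≤ d ≤ D, d squarefree odd} β_d (k/d)|² ≤ C K₁ Σ_{1 ≤ d ≤ D} |β_d|²`,
where `(k/d)` is the Jacobi symbol. -/
theorem stmt_4 :
    ∃ C : ℝ, 0 < C ∧
      ∀ (D K₁ : ℝ), 2 ≤ D → D ^ 3 ≤ K₁ →
      ∀ β : ℕ → ℂ,
        (∀ d : ℕ, β d ≠ 0 → 1 ≤ d ∧ (d : ℝ) ≤ D ∧ Squarefree d ∧ Odd d) →
        ∑ k ∈ (Finset.range (Nat.floor (2 * K₁) + 1)).filter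
            (fun k : ℕ => K₁ < (k : ℝ) ∧ (k : ℝ) ≤ 2 * K₁),
          ‖∑ d ∈ (Finset.Icc 1 (Nat.floor D)).filter (fun d => Squarefree d ∧ Odd d),
              β d * (jacobiSym (k : ℤ) d : ℂ)‖ ^ 2
        ≤ C * K₁ * ∑ d ∈ Finset.Icc 1 (Nat.floor D), ‖β d‖ ^ 2 := by
  refine ⟨4, by norm_num, fun D K hD hK β _ => ?_⟩
  have hD0 : 0 ≤ D := by linarith
  have hK0 : 0 ≤ K := le_trans (by positivity) hK
  have hA : (Finset.range (Nat.floor (2 * K) + 1)).filter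
      (fun k : ℕ => K < (k : ℝ) ∧ (k : ℝ) ≤ 2 * K) =
      Finset.Ico (⌊K⌋₊ + 1) (⌊2 * K⌋₊ + 1) := by
    ext k
    simp only [Finset.mem_filter, Finset.mem_range, Finset.mem_Ico, Nat.lt_succ_iff,
      Nat.succ_le_iff, Nat.floor_lt hK0, Nat.le_floor_iff (by positivity : 0 ≤ 2 * K)]
    tauto
  rw [hA]
  set A := Finset.Ico (⌊K⌋₊ + 1) (⌊2 * K⌋₊ + 1)
  set B := (Finset.Icc 1 (Nat.floor D)).filter (fun d => Squarefree d ∧ Odd d) with hB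
  have hle : ⌊K⌋₊ + 1 ≤ ⌊2 * K⌋₊ + 1 := by
    gcongr; linarith
  have hBD : ∀ d ∈ B, (d : ℝ) ≤ D := fun d hd => by
    rw [hB, Finset.mem_filter, Finset.mem_Icc] at hd
    exact (Nat.le_floor_iff hD0).1 hd.1.2
  have hAcard : (A.card : ℝ) ≤ 2 * K := by
    rw [Nat.card_Ico]
    calc ((⌊2 * K⌋₊ + 1 - (⌊K⌋₊ + 1) : ℕ) : ℝ) ≤ (⌊2 * K⌋₊ : ℝ) := by
          exact_mod_cast (by omega)
      _ ≤ 2 * K := Nat.floor_le (by positivity)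
  have hM : ∀ d ∈ B, ∀ e ∈ B,
      |((∑ k ∈ A, jacobiSym (k : ℤ) d * jacobiSym (k : ℤ) e : ℤ) : ℝ)| ≤
        2 * D ^ 2 + if d = e then 2 * K else 0 := by
    intro d hd e he
    have hdD := hBD d hd
    have heD := hBD e he
    rw [hB, Finset.mem_filter] at hd he
    split_ifs with hde
    · have : |∑ k ∈ A, jacobiSym (k : ℤ) d * jacobiSym (k : ℤ) e| ≤ (A.card : ℤ) := by
        refine (Finset.abs_sum_le_sum_abs _ _).trans ?_
        rw [Finset.card_eq_sum_ones]
        push_cast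
        refine Finset.sum_le_sum fun k _ => ?_
        rw [abs_mul]
        exact mul_le_one₀ (abs_jacobi_le _ _) (abs_nonneg _) (abs_jacobi_le _ _)
      have h' : |((∑ k ∈ A, jacobiSym (k : ℤ) d * jacobiSym (k : ℤ) e : ℤ) : ℝ)| ≤
          (A.card : ℝ) := by exact_mod_cast this
      nlinarith [sq_nonneg D]
    · have h0 := sum_jacobi_eq_zero d e hd.2.1 hd.2.2 he.2.1 he.2.2 hde
      have hq := mul_ne_zero hd.2.1.ne_zero he.2.1.ne_zero
      have h1 := abs_sum_Ico_le (d * e) hq h0 _ _ hle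
      have : NeZero d := ⟨hd.2.1.ne_zero⟩
      have : NeZero e := ⟨he.2.1.ne_zero⟩
      simp only [jacobiSym.mul_right] at h1
      have h' : |((∑ k ∈ A, jacobiSym (k : ℤ) d * jacobiSym (k : ℤ) e : ℤ) : ℝ)| ≤
          2 * ((d : ℝ) * e) := by exact_mod_cast h1
      have : (d : ℝ) * e ≤ D * D := mul_le_mul hdD heD (by positivity) hD0
      nlinarith
  refine (quadratic_form_le A B β (fun k d => jacobiSym (k : ℤ) d) _ hM).trans ?_
  set N := ∑ d ∈ B, ‖β d‖ ^ 2
  have hsplit : ∑ d ∈ B, ∑ e ∈ B, ‖β d‖ * ‖β e‖ * (2 * D ^ 2 + if d = e then 2 * K else 0) =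
      2 * D ^ 2 * (∑ d ∈ B, ‖β d‖) ^ 2 + 2 * K * N := by
    simp only [mul_add, Finset.sum_add_distrib]
    congr 1
    · rw [sq (∑ d ∈ B, ‖β d‖), Finset.sum_mul_sum, Finset.mul_sum]
      refine Finset.sum_congr rfl fun d _ => ?_
      rw [Finset.mul_sum]
      exact Finset.sum_congr rfl fun e _ => by ring
    · rw [Finset.mul_sum]
      refine Finset.sum_congr rfl fun d hd => ?_
      simp only [mul_ite, mul_zero, Finset.sum_ite_eq, hd, if_true]
      ring
  rw [hsplit]
  have hN0 : 0 ≤ N := Finset.sum_nonneg fun _ _ => by positivity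
  have hBcard : (B.card : ℝ) ≤ D := by
    have h : B.card ≤ ⌊D⌋₊ := (Finset.card_filter_le _ _).trans (by simp)
    exact (Nat.le_floor_iff hD0).1 h
  have hCS : (∑ d ∈ B, ‖β d‖) ^ 2 ≤ D * N :=
    (sq_sum_le_card_mul_sum_sq).trans (mul_le_mul_of_nonneg_right hBcard hN0)
  have hNle : N ≤ ∑ d ∈ Finset.Icc 1 (Nat.floor D), ‖β d‖ ^ 2 :=
    Finset.sum_le_sum_of_subset_of_nonneg (Finset.filter_subset _ _) fun _ _ _ => by positivity
  calc 2 * D ^ 2 * (∑ d ∈ B, ‖β d‖) ^ 2 + 2 * K * N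
      ≤ 2 * D ^ 2 * (D * N) + 2 * K * N := by gcongr
    _ = 2 * D ^ 3 * N + 2 * K * N := by ring
    _ ≤ 2 * K * N + 2 * K * N := by gcongr
    _ = 4 * K * N := by ring
    _ ≤ _ := by gcongr
end

section
/- Let d be a squarefree positive integer and let a, b be coprime integers. Then the number of pairs (x, y) ∈ (ℤ/dℤ)² with a x² + b y³ = 0 in ℤ/dℤ is exactly d. -/
/-!
The number of solutions is multiplicative in `d` by the Chinese remainder theorem, so only prime
`d = p` matters. Over the field `ℤ/pℤ` at most one of `a`, `b` vanishes. If `a = 0` the curve is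
the line `y = 0`; if `b = 0` it is the line `x = 0`. Otherwise it is the cuspidal cubic
`x² = c y³` with `c = -b / a`, which `t ↦ (t³ / c, t² / c)` parametrizes bijectively, the inverse
being `t = x / y` (with `0 / 0 = 0` at the cusp). In each case there are exactly `p` points.
-/

/-- The affine curve `a x² + b y³ = 0` over a field is in bijection with the line, unless
`a = b = 0`. -/
lemma card_cusp_field {F : Type*} [Field F] (a b : F) (hab : a ≠ 0 ∨ b ≠ 0) :
    Nat.card {xy : F × F // a * xy.1 ^ 2 + b * xy.2 ^ 3 = 0} = Nat.card F := by
  by_cases ha : a = 0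
  · have hb : b ≠ 0 := hab.resolve_left (not_not_intro ha)
    refine Nat.card_congr ⟨fun z => z.1.1, fun t => ⟨(t, 0), by simp [ha]⟩, ?_, fun t => rfl⟩
    rintro ⟨⟨x, y⟩, h⟩
    have hy : y = 0 := by simpa [ha, hb] using h
    simp [hy]
  by_cases hb : b = 0
  · refine Nat.card_congr ⟨fun z => z.1.2, fun t => ⟨(0, t), by simp [hb]⟩, ?_, fun t => rfl⟩
    rintro ⟨⟨x, y⟩, h⟩
    have hx : x = 0 := by simpa [ha, hb] using h
    simp [hx]
  -- Here `1 / c = -a / b`.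
  refine Nat.card_congr ⟨fun z => z.1.1 / z.1.2,
    fun t => ⟨(-a / b * t ^ 3, -a / b * t ^ 2), by field_simp; ring⟩, ?_, ?_⟩
  · rintro ⟨⟨x, y⟩, h⟩
    simp only at h
    by_cases hy : y = 0
    · have hx : x = 0 := by simpa [ha, hy] using h
      simp [hx, hy]
    · simp only [Subtype.mk.injEq, Prod.mk.injEq]
      constructor
      · field_simp
        linear_combination (-x) * h
      · field_simp
        linear_combination (-1) * h
  · intro t
    by_cases ht : t = 0
    · simp [ht]
    · simp only
      field_simp

/-- Multiplicativity of the solution count, from the Chinese remainder theorem. -/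
lemma card_cusp_mul {m n : ℕ} (h : m.Coprime n) (a b : ℤ) :
    Nat.card {xy : ZMod (m * n) × ZMod (m * n) //
      (a : ZMod (m * n)) * xy.1 ^ 2 + (b : ZMod (m * n)) * xy.2 ^ 3 = 0} =
    Nat.card {xy : ZMod m × ZMod m // (a : ZMod m) * xy.1 ^ 2 + (b : ZMod m) * xy.2 ^ 3 = 0} *
    Nat.card {xy : ZMod n × ZMod n // (a : ZMod n) * xy.1 ^ 2 + (b : ZMod n) * xy.2 ^ 3 = 0} := by
  rw [← Nat.card_prod]
  let e := ZMod.chineseRemainder h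
  let E : ZMod (m * n) × ZMod (m * n) ≃ (ZMod m × ZMod m) × (ZMod n × ZMod n) :=
    (e.toEquiv.prodCongr e.toEquiv).trans (Equiv.prodProdProdComm _ _ _ _)
  refine Nat.card_congr ((E.subtypeEquiv (q := fun w =>
    ((a : ZMod m) * w.1.1 ^ 2 + (b : ZMod m) * w.1.2 ^ 3 = 0) ∧
    ((a : ZMod n) * w.2.1 ^ 2 + (b : ZMod n) * w.2.2 ^ 3 = 0)) ?_).trans
    (Equiv.subtypeProdEquivProd (p := fun w : ZMod m × ZMod m =>
      (a : ZMod m) * w.1 ^ 2 + (b : ZMod m) * w.2 ^ 3 = 0) (q := fun w : ZMod n × ZMod n =>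
      (a : ZMod n) * w.1 ^ 2 + (b : ZMod n) * w.2 ^ 3 = 0)))
  rintro ⟨x, y⟩
  rw [← map_eq_zero_iff e e.injective, map_add, map_mul, map_mul, map_pow, map_pow, map_intCast,
    map_intCast, Prod.ext_iff]
  rfl

/-- Let `d` be a squarefree positive integer and `a, b` coprime integers.
Then the number of pairs `(x, y) ∈ (ℤ/dℤ)²` with `a x² + b y³ = 0` in `ℤ/dℤ`
is exactly `d`. -/
theorem stmt_6 (d : ℕ) (hd : 0 < d) (hsf : Squarefree d) (a b : ℤ)
    (hab : IsCoprime a b) :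
    Nat.card {xy : ZMod d × ZMod d //
      (a : ZMod d) * xy.1 ^ 2 + (b : ZMod d) * xy.2 ^ 3 = 0} = d := by
  induction d using Nat.recOnPosPrimePosCoprime with
  | zero => exact absurd hd (lt_irrefl 0)
  | one =>
    rw [Nat.card_eq_one_iff_unique]
    exact ⟨inferInstance, ⟨⟨(0, 0), Subsingleton.elim _ _⟩⟩⟩
  | prime_pow p n hp hn =>
    obtain rfl : n = 1 :=
      ((Nat.squarefree_pow_iff hp.ne_one hn.ne').1 hsf).2
    rw [pow_one]
    haveI := Fact.mk hp
    rw [card_cusp_field, Nat.card_zmod]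
    by_contra! h
    have := hab.map (Int.castRingHom (ZMod p))
    simp [h.1, h.2] at this
  | coprime m n hm hn h ihm ihn =>
    rw [card_cusp_mul h, ihm (by lia) (hsf.squarefree_of_dvd (dvd_mul_right _ _)),
      ihn (by lia) (hsf.squarefree_of_dvd (dvd_mul_left _ _))]
end

section
/- Let C > 0. There is a constant C' (depending only on C and the constants C_J below) such that for all D ≥ 2, all K ≥ D³, all odd squarefree integers d₁, d₂ with 1 ≤ d₁, d₂ ≤ D, and every smooth function F : ℝ → ℝ supported in [1,2] with |F^{(J)}(u)| ≤ C_J for all J ≥ 0: | Σ_{k ≥ 1} F(k/K) (k/(d₁ d₂)) | ≤ C' ( D^{-C} + K · 1_{d₁ = d₂} ), where (k/(d₁d₂)) denotes the Jacobi symbol. -/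
/-!
The argument replaces Poisson summation by repeated summation by parts.

Put `N = d₁ d₂ ≤ D²` and `h = 1 / K`.  When `d₁ ≠ d₂`, some prime divides `N` exactly once, so the
Jacobi symbol modulo `N` takes the value `-1`, and therefore sums to zero over every window of `N`
consecutive integers (`jacobi_window`).  A function `χ : ℤ → ℝ` bounded by `B` with vanishing window
sums has a discrete antiderivative `ψ k = -(1 / N) ∑_{j < N} j χ (k - j)`, which again has vanishing
window sums and is bounded by `N B` (`exists_antideriv`).  Summing by parts `J` times moves `J`
forward differences of step `h` onto `F` (`abel_iter`).  These are at most `Cf J * h ^ J`, by the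
mean value theorem (`fwdDiff_iter_bound`), and live on at most `K + J + 1` integers, so the sum is
`O(N ^ J K ^ (1 - J)) = O(D ^ (3 - J))`.  Taking `J ≥ C + 3` finishes this case, and the case `J = 0`
of the same count gives the trivial bound `O(K)` used when `d₁ = d₂`.
-/

/-- A prime `p` dividing the odd squarefree number `d₁` but not `d₂` divides `d₁ d₂` exactly once, so
the Jacobi symbol modulo `d₁ d₂` takes the value `-1` at any integer that is a nonresidue modulo `p`
and `1` modulo the cofactor. -/
lemma exists_jacobi_neg_one_of_prime {d₁ d₂ p : ℕ} (h₁ : Odd d₁) (s₁ : Squarefree d₁)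
    (hd₂ : d₂ ≠ 0) (hp : p.Prime) (hp₁ : p ∣ d₁) (hp₂ : ¬ p ∣ d₂) :
    ∃ k : ℕ, jacobiSym (k : ℤ) (d₁ * d₂) = -1 := by
  obtain ⟨m, rfl⟩ := hp₁
  have : Fact p.Prime := ⟨hp⟩
  have hpm : ¬ p ∣ m := by
    rintro ⟨c, rfl⟩
    exact hp.not_isUnit (s₁ p ⟨c, by ring⟩)
  have hm : m ≠ 0 := by
    rintro rfl
    simp at hpm
  have hp2 : p ≠ 2 := by
    rintro rfl
    exact absurd h₁ (by simp [parity_simps])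
  obtain ⟨a, ha⟩ := FiniteField.exists_nonsquare (F := ZMod p) (by rwa [ZMod.ringChar_zmod_n])
  have hcop : p.Coprime (m * d₂) :=
    (Nat.Prime.coprime_iff_not_dvd hp).2 (fun h => (hp.dvd_mul.1 h).elim hpm hp₂)
  obtain ⟨k, hk₁, hk₂⟩ := Nat.chineseRemainder hcop a.val 1
  refine ⟨k, ?_⟩
  have : NeZero (m * d₂) := ⟨mul_ne_zero hm hd₂⟩
  have : NeZero p := ⟨hp.ne_zero⟩
  rw [mul_assoc, jacobiSym.mul_right]
  have e₁ : jacobiSym (k : ℤ) p = -1 := by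
    rw [← jacobiSym.legendreSym.to_jacobiSym, legendreSym.eq_neg_one_iff]
    have : (k : ZMod p) = a := by
      rw [(ZMod.natCast_eq_natCast_iff _ _ _).2 hk₁, ZMod.natCast_zmod_val]
    simpa [this] using ha
  have e₂ : jacobiSym (k : ℤ) (m * d₂) = 1 := by
    rw [jacobiSym.mod_left' (a₂ := 1) (by exact_mod_cast hk₂), jacobiSym.one_left]
  rw [e₁, e₂]
  norm_num

lemma exists_jacobi_neg_one_s9 {d₁ d₂ : ℕ} (h₁ : Odd d₁) (h₂ : Odd d₂) (s₁ : Squarefree d₁)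
    (s₂ : Squarefree d₂) (hne : d₁ ≠ d₂) :
    ∃ k : ℕ, jacobiSym (k : ℤ) (d₁ * d₂) = -1 := by
  have := (Nat.Squarefree.ext_iff s₁ s₂).not.1 hne
  push Not at this
  obtain ⟨p, hp, h | h⟩ := this
  · exact exists_jacobi_neg_one_of_prime h₁ s₁ s₂.ne_zero hp h.1 h.2
  · rw [mul_comm]
    exact exists_jacobi_neg_one_of_prime h₂ s₂ s₁.ne_zero hp h.2 h.1

/-- The sum of the Jacobi symbol over `N` consecutive integers is invariant under multiplication by
`k`, hence vanishes as soon as the symbol takes the value `-1`. -/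
lemma jacobi_window {N : ℕ} (hN : N ≠ 0) {k : ℕ} (hk : jacobiSym (k : ℤ) N = -1) (a : ℤ) :
    ∑ j ∈ Finset.range N, (jacobiSym (a - j) N : ℝ) = 0 := by
  have : NeZero N := ⟨hN⟩
  let g : ZMod N → ℤ := fun x => jacobiSym (x.val : ℤ) N
  have hg : ∀ z : ℤ, g (z : ZMod N) = jacobiSym z N := by
    intro z
    apply jacobiSym.mod_left'
    rw [ZMod.val_intCast, Int.emod_emod_of_dvd _ dvd_rfl]
  have hcop : k.Coprime N := by
    by_contra h
    have : jacobiSym (k : ℤ) N = 0 := jacobiSym.eq_zero_iff_not_coprime.2 (by simpa using h)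
    omega
  have hsum : ∑ x, g x = 0 := by
    have h1 : ∑ x, g ((ZMod.unitOfCoprime k hcop : ZMod N) * x) = ∑ x, g x :=
      Equiv.sum_comp (Units.mulLeft (ZMod.unitOfCoprime k hcop)) g
    have h2 : ∀ x, g ((ZMod.unitOfCoprime k hcop : ZMod N) * x) = - g x := by
      intro x
      have : (ZMod.unitOfCoprime k hcop : ZMod N) * x = (((k : ℤ) * (x.val : ℤ) : ℤ) : ZMod N) := by
        simp
      rw [this, hg, jacobiSym.mul_left, hk]
      simp [g]
    simp only [h2, Finset.sum_neg_distrib] at h1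
    omega
  have hw : ∑ j ∈ Finset.range N, jacobiSym (a - j) N = ∑ x, g ((a : ZMod N) - x) := by
    refine Finset.sum_bij' (fun j _ => (j : ZMod N)) (fun x _ => x.val) ?_ ?_ ?_ ?_ ?_
    · simp
    · intro x _
      simpa using ZMod.val_lt x
    · intro j hj
      exact ZMod.val_cast_of_lt (by simpa using hj)
    · simp
    · intro j _
      rw [← hg]
      simp
  have hz : ∑ j ∈ Finset.range N, jacobiSym (a - j) N = 0 := by
    rw [hw, ← hsum]
    exact Equiv.sum_comp (Equiv.subLeft (a : ZMod N)) g
  exact_mod_cast hz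

/-- The witness is `ψ k = -(1 / N) ∑_{j < N} j χ (k - j)`; being a combination of translates of `χ`, it
inherits the vanishing window sums, so the construction can be iterated. -/
lemma exists_antideriv {N : ℕ} (hN : N ≠ 0) {χ : ℤ → ℝ} {B : ℝ}
    (hχ : ∀ a, ∑ j ∈ Finset.range N, χ (a - j) = 0) (hB : ∀ a, |χ a| ≤ B) :
    ∃ ψ : ℤ → ℝ, (∀ a, ∑ j ∈ Finset.range N, ψ (a - j) = 0) ∧ (∀ a, |ψ a| ≤ N * B) ∧
      ∀ a, χ a = ψ a - ψ (a - 1) := by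
  have hN' : (N : ℝ) ≠ 0 := by exact_mod_cast hN
  have hB0 : 0 ≤ B := (abs_nonneg _).trans (hB 0)
  refine ⟨fun k => -(1 / (N : ℝ)) * ∑ j ∈ Finset.range N, (j : ℝ) * χ (k - j), ?_, ?_, ?_⟩
  · intro a
    rw [← Finset.mul_sum, Finset.sum_comm]
    have : ∀ j ∈ Finset.range N, ∑ i ∈ Finset.range N, (j : ℝ) * χ (a - i - j) = 0 := by
      intro j _
      rw [← Finset.mul_sum]
      simp_rw [sub_right_comm a _ (j : ℤ)]
      rw [hχ, mul_zero]
    rw [Finset.sum_eq_zero this, mul_zero]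
  · intro a
    have h1 : |∑ j ∈ Finset.range N, (j : ℝ) * χ (a - j)| ≤ N * (N * B) := by
      refine (Finset.abs_sum_le_sum_abs _ _).trans ?_
      refine (Finset.sum_le_card_nsmul _ _ (N * B) ?_).trans (by simp)
      intro j hj
      rw [abs_mul, Nat.abs_cast]
      have : (j : ℝ) ≤ N := by exact_mod_cast (Finset.mem_range.1 hj).le
      exact mul_le_mul this (hB _) (abs_nonneg _) (by positivity)
    rw [abs_mul, abs_neg, abs_of_nonneg (by positivity)]
    calc 1 / (N : ℝ) * _ ≤ 1 / (N : ℝ) * (N * (N * B)) := by gcongr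
      _ = N * B := by field_simp
  · intro a
    -- Shift the second sum by one; the terms telescope to a window sum plus an endpoint term.
    have h1 : ∀ n : ℕ, ∑ j ∈ Finset.range n, (j : ℝ) * χ (a - j)
        - ∑ j ∈ Finset.range n, (j : ℝ) * χ (a - 1 - j)
        = ∑ j ∈ Finset.range n, χ (a - 1 - j) - n * χ (a - n) := by
      intro n
      induction n with
      | zero => simp
      | succ n ih =>
        rw [Finset.sum_range_succ, Finset.sum_range_succ, Finset.sum_range_succ]
        have e : a - ((n + 1 : ℕ) : ℤ) = a - 1 - n := by push_cast; ring
        rw [e]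
        push_cast
        linear_combination ih
    have h2 : χ (a - N) = χ a := by
      have e1 := Finset.sum_range_succ (fun j : ℕ => χ (a - j)) N
      have e2 := Finset.sum_range_succ' (fun j : ℕ => χ (a - j)) N
      have e3 : ∑ j ∈ Finset.range N, χ (a - ((j + 1 : ℕ) : ℤ)) = 0 := by
        rw [← hχ (a - 1)]
        refine Finset.sum_congr rfl fun j _ => ?_
        congr 1
        push_cast
        ring
      rw [e1, hχ, e3] at e2
      simpa using e2
    have h3 := h1 N
    rw [hχ, h2] at h3
    field_simp
    linear_combination h3

/-- Samples at step `h` of a function supported in `[a, b]` vanish off an explicit finite set. -/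
lemma sample_eq_zero {h a b : ℝ} (hh : 0 < h) {G : ℝ → ℝ} (hG : Function.support G ⊆ Set.Icc a b)
    (k : ℤ) (hk : k ∉ Finset.Icc ⌈a / h⌉ ⌊b / h⌋) : G (k * h) = 0 := by
  by_contra hne
  obtain ⟨h1, h2⟩ := hG hne
  apply hk
  rw [Finset.mem_Icc, Int.ceil_le, Int.le_floor, div_le_iff₀ hh, le_div_iff₀ hh]
  exact ⟨h1, h2⟩

lemma sample_summable {h a b : ℝ} (hh : 0 < h) {G : ℝ → ℝ}
    (hG : Function.support G ⊆ Set.Icc a b) (ψ : ℤ → ℝ) :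
    Summable fun k : ℤ => ψ k * G (k * h) :=
  summable_of_ne_finset_zero (s := Finset.Icc ⌈a / h⌉ ⌊b / h⌋) fun k hk => by
    rw [sample_eq_zero hh hG k hk, mul_zero]

lemma sample_bound {h a b : ℝ} (hh : 0 < h) (hab : a ≤ b) {G : ℝ → ℝ}
    (hG : Function.support G ⊆ Set.Icc a b) {ψ : ℤ → ℝ} {B M : ℝ} (hψ : ∀ k, |ψ k| ≤ B)
    (hM : ∀ x, |G x| ≤ M) :
    |∑' k : ℤ, ψ k * G (k * h)| ≤ ((b - a) / h + 1) * (B * M) := by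
  have hB0 : 0 ≤ B := (abs_nonneg _).trans (hψ 0)
  have hM0 : 0 ≤ M := (abs_nonneg _).trans (hM 0)
  rw [tsum_eq_sum (s := Finset.Icc ⌈a / h⌉ ⌊b / h⌋) fun k hk => by
    rw [sample_eq_zero hh hG k hk, mul_zero]]
  refine (Finset.abs_sum_le_sum_abs _ _).trans ?_
  refine (Finset.sum_le_card_nsmul _ _ (B * M) ?_).trans ?_
  · intro k _
    rw [abs_mul]
    exact mul_le_mul (hψ _) (hM _) (abs_nonneg _) hB0
  · rw [nsmul_eq_mul]
    refine mul_le_mul_of_nonneg_right ?_ (by positivity)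
    rw [Int.card_Icc]
    have h1 := Int.floor_le (b / h)
    have h2 := Int.le_ceil (a / h)
    have h3 : (((⌊b / h⌋ + 1 - ⌈a / h⌉).toNat : ℤ) : ℝ)
        = ((max (⌊b / h⌋ + 1 - ⌈a / h⌉) 0 : ℤ) : ℝ) := by rw [Int.toNat_eq_max]
    rw [Int.cast_natCast] at h3
    rw [h3]
    push_cast
    rw [sub_div]
    apply max_le
    · linarith
    · have : a / h ≤ b / h := by gcongr
      linarith

lemma support_fwdDiff {h a b : ℝ} (hh : 0 < h) {G : ℝ → ℝ}
    (hG : Function.support G ⊆ Set.Icc a b) :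
    Function.support (fwdDiff h G) ⊆ Set.Icc (a - h) b := by
  intro x hx
  by_contra hn
  apply hx
  have h0 : ∀ y, y ∉ Set.Icc a b → G y = 0 := fun y hy => by
    by_contra hne
    exact hy (hG hne)
  have e1 : G (x + h) = 0 := h0 _ fun hy => hn ⟨by linarith [hy.1], by linarith [hy.2]⟩
  have e2 : G x = 0 := h0 _ fun hy => hn ⟨by linarith [hy.1], by linarith [hy.2]⟩
  simp [fwdDiff, e1, e2]

lemma support_fwdDiff_iter {h a b : ℝ} (hh : 0 < h) {G : ℝ → ℝ}
    (hG : Function.support G ⊆ Set.Icc a b) (J : ℕ) :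
    Function.support ((fwdDiff h)^[J] G) ⊆ Set.Icc (a - J * h) b := by
  induction J with
  | zero => simpa using hG
  | succ J ih =>
    rw [Function.iterate_succ_apply']
    refine (support_fwdDiff hh ih).trans (Set.Icc_subset_Icc_left ?_)
    push_cast
    linarith

/-- `J`-fold summation by parts against a function with vanishing window sums. -/
lemma abel_iter {N : ℕ} (hN : N ≠ 0) {h b : ℝ} (hh : 0 < h) (J : ℕ) :
    ∀ (χ : ℤ → ℝ) (B a : ℝ) (G : ℝ → ℝ),
      (∀ a, ∑ j ∈ Finset.range N, χ (a - j) = 0) → (∀ a, |χ a| ≤ B) →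
      Function.support G ⊆ Set.Icc a b →
      ∃ ψ : ℤ → ℝ, (∀ k, |ψ k| ≤ (N : ℝ) ^ J * B) ∧
        |∑' k : ℤ, χ k * G (k * h)| = |∑' k : ℤ, ψ k * ((fwdDiff h)^[J] G) (k * h)| := by
  induction J with
  | zero =>
    intro χ B a G _ hB _
    exact ⟨χ, by simpa using hB, rfl⟩
  | succ J ih =>
    intro χ B a G hχ hB hG
    obtain ⟨φ, hφ, hφB, hd⟩ := exists_antideriv hN hχ hB
    obtain ⟨ψ, hψ, he⟩ := ih φ (N * B) (a - h) (fwdDiff h G) hφ hφB (support_fwdDiff hh hG)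
    refine ⟨ψ, fun k => (hψ k).trans (le_of_eq (by ring)), ?_⟩
    rw [Function.iterate_succ_apply, ← he, ← abs_neg, ← tsum_neg]
    congr 1
    have hshift : ∑' k : ℤ, φ (k - 1) * G (k * h) = ∑' k : ℤ, φ k * G (k * h + h) := by
      rw [← (Equiv.addRight (1 : ℤ)).tsum_eq]
      refine tsum_congr fun k => ?_
      simp [add_mul]
    have s1 := sample_summable hh hG φ
    have s2 := sample_summable hh hG (fun k => φ (k - 1))
    have s3 : Summable fun k : ℤ => φ k * G (k * h + h) := by
      rw [← (Equiv.addRight (1 : ℤ)).summable_iff] at s2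
      refine s2.congr fun k => ?_
      simp [add_mul]
    simp only [hd, sub_mul, neg_sub, fwdDiff, mul_sub]
    rw [s2.tsum_sub s1, s3.tsum_sub s1, hshift]

/-- By the mean value theorem, `J` forward differences of step `h` cost a factor `h ^ J`. -/
lemma fwdDiff_iter_bound {h : ℝ} (hh : 0 < h) (J : ℕ) :
    ∀ (G : ℝ → ℝ) (M : ℝ), ContDiff ℝ (⊤ : ℕ∞) G → (∀ x, |iteratedDeriv J G x| ≤ M) →
      ∀ x, |((fwdDiff h)^[J] G) x| ≤ h ^ J * M := by
  induction J with
  | zero =>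
    intro G M _ hM x
    simpa using hM x
  | succ J ih =>
    intro G M hG hM x
    have hGs : ContDiff ℝ (⊤ : ℕ∞) fun z => G (z + h) := hG.comp (contDiff_id.add contDiff_const)
    rw [Function.iterate_succ_apply, pow_succ, mul_assoc]
    refine ih (fwdDiff h G) (h * M) (hGs.sub hG) (fun y => ?_) x
    have hJ : ((J : ℕ) : WithTop ℕ∞) ≤ ((⊤ : ℕ∞) : WithTop ℕ∞) := by exact_mod_cast le_top
    have e : iteratedDeriv J (fwdDiff h G) y = iteratedDeriv J G (y + h) - iteratedDeriv J G y := by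
      have := iteratedDeriv_fun_sub (n := J) (x := y) (hGs.of_le hJ).contDiffAt
        (hG.of_le hJ).contDiffAt
      rw [iteratedDeriv_comp_add_const] at this
      exact this
    rw [e]
    have hdiff : Differentiable ℝ (iteratedDeriv J G) :=
      hG.differentiable_iteratedDeriv J (by exact_mod_cast ENat.natCast_lt_top J)
    have := Convex.norm_image_sub_le_of_norm_deriv_le (f := iteratedDeriv J G) (s := Set.univ)
      (x := y) (y := y + h) (C := M) (fun z _ => hdiff z)
      (fun z _ => by rw [← iteratedDeriv_succ]; exact hM z) convex_univ trivial trivial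
    rw [add_sub_cancel_left, Real.norm_eq_abs, Real.norm_eq_abs, abs_of_pos hh] at this
    linarith

/-- Let `C > 0`.  There is `C'` (depending only on `C` and the `C_J`)
such that for all `D ≥ 2`, `K ≥ D³`, all odd squarefree `1 ≤ d₁, d₂ ≤ D` and every
smooth `F` supported in `[1,2]` with `|F^{(J)}| ≤ C_J`:
`|Σ_{k ≥ 1} F(k/K) (k/(d₁d₂))| ≤ C' (D^{-C} + K · 1_{d₁=d₂})`. -/
theorem stmt_9 (C : ℝ) (hC : 0 < C) (Cf : ℕ → ℝ) :
    ∃ C' : ℝ, 0 < C' ∧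
      ∀ D K : ℝ, 2 ≤ D → D ^ 3 ≤ K →
      ∀ d₁ d₂ : ℕ, Odd d₁ → Odd d₂ → Squarefree d₁ → Squarefree d₂ →
        1 ≤ d₁ → (d₁ : ℝ) ≤ D → 1 ≤ d₂ → (d₂ : ℝ) ≤ D →
      ∀ F : ℝ → ℝ, ContDiff ℝ (⊤ : ℕ∞) F → Function.support F ⊆ Set.Icc 1 2 →
        (∀ (J : ℕ) (u : ℝ), |iteratedDeriv J F u| ≤ Cf J) →
        |∑' k : ℕ, F (k / K) * (jacobiSym (k : ℤ) (d₁ * d₂) : ℝ)|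
          ≤ C' * (D ^ (-C) + K * (if d₁ = d₂ then 1 else 0)) := by
  -- `J = L + 3` summations by parts save the factor `D ^ (-L) ≤ D ^ (-C)`.
  obtain ⟨L, hL⟩ := exists_nat_ge C
  refine ⟨(L + 5) * |Cf (L + 3)| + 2 * |Cf 0| + 1, by positivity, ?_⟩
  intro D K hD hK d₁ d₂ o₁ o₂ s₁ s₂ p₁ b₁ p₂ b₂ F hF hsupp hder
  have hD0 : 0 < D := by linarith
  have hK1 : 1 ≤ K := le_trans (one_le_pow₀ (by linarith)) hK
  have hK0 : 0 < K := by linarith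
  set h : ℝ := 1 / K with hh_def
  have hh : 0 < h := by positivity
  set N := d₁ * d₂ with hN_def
  have hN : N ≠ 0 := mul_ne_zero s₁.ne_zero s₂.ne_zero
  let χ : ℤ → ℝ := fun k => (jacobiSym k N : ℝ)
  have hχ1 : ∀ k, |χ k| ≤ 1 := by
    intro k
    rcases jacobiSym.trichotomy k N with e | e | e <;> simp [χ, e]
  have hZ : ∑' k : ℕ, F (k / K) * (jacobiSym (k : ℤ) N : ℝ) = ∑' k : ℤ, χ k * F (k * h) := by
    rw [← Function.Injective.tsum_eq (g := ((↑) : ℕ → ℤ)) Nat.cast_injective]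
    · refine tsum_congr fun k => ?_
      simp only [χ, hh_def, mul_one_div, Int.cast_natCast]
      ring
    · intro k hk
      have hk' : F (k * h) ≠ 0 := right_ne_zero_of_mul hk
      have hpos : 0 < (k : ℝ) * h := lt_of_lt_of_le one_pos (hsupp hk').1
      have : 0 < (k : ℝ) := pos_of_mul_pos_left hpos hh.le
      exact ⟨k.toNat, Int.toNat_of_nonneg (by exact_mod_cast this.le)⟩
  rw [hZ]
  have hDC : 0 < D ^ (-C) := Real.rpow_pos_of_pos hD0 _
  have main : ∀ (J : ℕ) (ψ : ℤ → ℝ) (B : ℝ), (∀ k, |ψ k| ≤ B) →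
      |∑' k : ℤ, ψ k * ((fwdDiff h)^[J] F) (k * h)| ≤ (J + 2) * |Cf J| * (B * h ^ J * K) := by
    intro J ψ B hψ
    have hB0 : 0 ≤ B := (abs_nonneg _).trans (hψ 0)
    have hJh : 0 ≤ (J : ℝ) * h := by positivity
    refine (sample_bound hh (by linarith) (support_fwdDiff_iter hh hsupp J) hψ
      (fwdDiff_iter_bound hh J F |Cf J| hF fun x => (hder J x).trans (le_abs_self _))).trans ?_
    have e : (2 - (1 - J * h)) / h + 1 = K + J + 1 := by
      rw [hh_def]
      field_simp
      ring
    rw [e]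
    have : K + J + 1 ≤ (J + 2) * K := by
      nlinarith [(Nat.cast_nonneg J : (0 : ℝ) ≤ J)]
    calc _ ≤ (J + 2) * K * (B * (h ^ J * |Cf J|)) := by gcongr
      _ = _ := by ring
  by_cases hd : d₁ = d₂
  · have := main 0 χ 1 hχ1
    simp only [Function.iterate_zero, id, pow_zero, Nat.cast_zero] at this
    rw [if_pos hd]
    refine this.trans ?_
    have h1 : 0 ≤ ((L : ℝ) + 5) * |Cf (L + 3)| := by positivity
    have h2 := abs_nonneg (Cf 0)
    calc (0 + 2) * |Cf 0| * (1 * 1 * K) = (2 * |Cf 0|) * K := by ring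
      _ ≤ _ := mul_le_mul (by linarith) (by linarith) hK0.le (by positivity)
  · obtain ⟨k, hk⟩ := exists_jacobi_neg_one_s9 o₁ o₂ s₁ s₂ hd
    obtain ⟨ψ, hψ, he⟩ := abel_iter hN hh (L + 3) χ 1 1 F (jacobi_window hN hk) hχ1 hsupp
    rw [he, if_neg hd, mul_zero, add_zero]
    refine (main (L + 3) ψ _ hψ).trans ?_
    have hND : (N : ℝ) ≤ D ^ 2 := by
      rw [hN_def, sq]
      push_cast
      gcongr
    have hsmall : (N : ℝ) ^ (L + 3) * 1 * h ^ (L + 3) * K ≤ D ^ (-C) := by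
      have e1 : (N : ℝ) ^ (L + 3) * 1 * h ^ (L + 3) * K = (N : ℝ) ^ (L + 3) / K ^ (L + 2) := by
        rw [hh_def, div_pow, one_pow, pow_succ K (L + 2)]
        field_simp
      have e2 : (N : ℝ) ^ (L + 3) / K ^ (L + 2) ≤ (D ^ 2) ^ (L + 3) / (D ^ 3) ^ (L + 2) := by
        gcongr
      have e3 : (D ^ 2) ^ (L + 3) / (D ^ 3) ^ (L + 2) = D ^ (-(L : ℝ)) := by
        rw [Real.rpow_neg hD0.le, Real.rpow_natCast]
        field_simp
        ring
      rw [e1]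
      exact e2.trans (e3.le.trans (Real.rpow_le_rpow_of_exponent_le (by linarith) (by linarith)))
    have h2 := abs_nonneg (Cf 0)
    refine mul_le_mul ?_ hsmall (by positivity) (by positivity)
    push_cast
    linarith
end

section
/- Let η, δ, δ₀ ∈ (0,1) and R > 0. Let F : ℝ² → ℂ be a smooth function supported in (η, 1/η)², vanishing at every point (x₁, x₂) with x₁² − x₂² ≤ δ₀, and satisfying |∂_{x₁}^{J₁} ∂_{x₂}^{J₂} F(x₁, x₂)| ≤ C_{J₁,J₂} δ^{-J₁-J₂} for all J₁, J₂ ≥ 0. Then for every J ≥ 0 there is a constant C (depending only on η, J and the constants C_{J₁,J₂}) such that for all ℓ ∈ ℤ and all t ∈ ℝ: | ∫_ℝ ∫_0^∞ F(r cosh α, r sinh α) e^{-2πi ℓ α / R} r^{it} (dr/r) dα | ≤ C (1 + |log δ₀|) / (1 + δ|ℓ|/R + δ|t|)^J. -/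
/-!
The substitution `r = e^u` turns the coefficient into the two-dimensional Fourier integral
`∫∫ G(u, α) e^{-iaα} e^{itu} du dα` with `G(u, α) = F(e^u cosh α, e^u sinh α)` and `a = 2πℓ/R`.
It is enough to bound this integral trivially, after `J` integrations by parts in `u` alone, and
after `J` integrations by parts in `α` alone, because
`(1 + b + c)^J ≤ 3^J (1 + b^J + c^J)` for `b, c ≥ 0`.

* Derivatives of `G`. The mixed partial derivatives of `F` control the norms of its Fréchet
  derivatives (`norm_iteratedFDeriv_le_of_partials`), and the Faà di Bruno bound applies along the
  curves `u ↦ (e^u cosh α, e^u sinh α)` and `α ↦ (e^u cosh α, e^u sinh α)`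
  (`norm_iteratedDeriv_comp_curve`). Every derivative of such a curve is the curve itself or its
  mirror image in the diagonal, so it is bounded by `1/η` over the support of `F`. Hence
  `n`-th derivatives of `G` in `u` or in `α` are `O(δ^{-n})`.
* Support of `G`. Since `e^{u+α} = x₁ + x₂` lies in `(2η, 2/η)` and `e^{2u} = x₁² - x₂²` lies in
  `(δ₀, η^{-2})`, the sum `u + α` ranges over an interval of length `O(1)` while `u` and `α` range
  over intervals of length `O(1 + |log δ₀|)` (`support_bounds`). This is symmetric in `u` and `α`,
  so one estimate (`oscillatory_bound`) covers both directions, after Fubini for the second one.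
-/

open MeasureTheory

/-! ### Partial derivatives and Fréchet derivatives on `ℝ × ℝ` -/

/-- The directional derivative operator `H ↦ ∂_v H` on functions on the plane. -/
noncomputable def dirD (v : ℝ × ℝ) (H : ℝ × ℝ → ℂ) : ℝ × ℝ → ℂ := fun p => fderiv ℝ H p v

lemma dirD_smooth (v : ℝ × ℝ) {H : ℝ × ℝ → ℂ} (hH : ContDiff ℝ (⊤ : ℕ∞) H) :
    ContDiff ℝ (⊤ : ℕ∞) (dirD v H) :=
  (hH.fderiv_right (m := (⊤ : ℕ∞)) (by simp)).clm_apply contDiff_const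

lemma dirD_iterate_smooth (v : ℝ × ℝ) (k : ℕ) {H : ℝ × ℝ → ℂ} (hH : ContDiff ℝ (⊤ : ℕ∞) H) :
    ContDiff ℝ (⊤ : ℕ∞) ((dirD v)^[k] H) := by
  induction k generalizing H with
  | zero => exact hH
  | succ k ih => exact ih (dirD_smooth v hH)

lemma dirD_comm (v w : ℝ × ℝ) {H : ℝ × ℝ → ℂ} (hH : ContDiff ℝ (⊤ : ℕ∞) H) :
    dirD v (dirD w H) = dirD w (dirD v H) := by
  have key : ∀ a b p, dirD a (dirD b H) p = fderiv ℝ (fderiv ℝ H) p a b := by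
    intro a b p
    have h1 : DifferentiableAt ℝ (fderiv ℝ H) p :=
      (hH.fderiv_right (m := (⊤ : ℕ∞)) (by simp)).differentiable (by simp) p
    have h2 := (h1.hasFDerivAt.clm_apply (hasFDerivAt_const b p)).fderiv
    unfold dirD
    rw [h2]
    simp
  have hs : ∀ p, IsSymmSndFDerivAt ℝ H p := fun p =>
    hH.contDiffAt.isSymmSndFDerivAt (by
      rw [minSmoothness_of_isRCLikeNormedField]
      exact WithTop.coe_le_coe.2 le_top)
  ext p
  rw [key, key]
  exact hs p v w

lemma dirD_iterate_comm (v w : ℝ × ℝ) (k : ℕ) {H : ℝ × ℝ → ℂ} (hH : ContDiff ℝ (⊤ : ℕ∞) H) :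
    (dirD w)^[k] (dirD v H) = dirD v ((dirD w)^[k] H) := by
  induction k with
  | zero => rfl
  | succ k ih =>
    rw [Function.iterate_succ_apply', ih, Function.iterate_succ_apply',
      dirD_comm w v (dirD_iterate_smooth w k hH)]

lemma fderiv_eq_dirD (H : ℝ × ℝ → ℂ) : fderiv ℝ H =
    (ContinuousLinearMap.smulRightL ℝ (ℝ × ℝ) ℂ (ContinuousLinearMap.fst ℝ ℝ ℝ)) ∘ dirD (1, 0) H +
    (ContinuousLinearMap.smulRightL ℝ (ℝ × ℝ) ℂ (ContinuousLinearMap.snd ℝ ℝ ℝ)) ∘ dirD (0, 1) H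
    := by
  ext p <;> simp [dirD]

lemma norm_smulRightL_le (c : ℝ × ℝ →L[ℝ] ℝ) (hc : ‖c‖ ≤ 1) :
    ‖ContinuousLinearMap.smulRightL ℝ (ℝ × ℝ) ℂ c‖ ≤ 1 := by
  refine ContinuousLinearMap.opNorm_le_bound _ zero_le_one fun z => ?_
  change ‖c.smulRight z‖ ≤ _
  rw [ContinuousLinearMap.norm_smulRight_apply]
  gcongr

/-- Bounds for all mixed partials of order at most `n` bound the `n`-th Fréchet derivative;
the factor `2^n` counts the words of length `n` in the two coordinate directions. -/
lemma norm_iteratedFDeriv_le_of_partials (n : ℕ) {H : ℝ × ℝ → ℂ}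
    (hH : ContDiff ℝ (⊤ : ℕ∞) H) (p : ℝ × ℝ) (M : ℝ)
    (hM : ∀ j k, j + k ≤ n → ‖(dirD (1, 0))^[j] ((dirD (0, 1))^[k] H) p‖ ≤ M) :
    ‖iteratedFDeriv ℝ n H p‖ ≤ 2 ^ n * M := by
  induction n generalizing H with
  | zero => simpa using hM 0 0 le_rfl
  | succ n ih =>
    have hs1 := dirD_smooth (1, 0) hH
    have hs2 := dirD_smooth (0, 1) hH
    have hn : (n : WithTop ℕ∞) ≤ ((⊤ : ℕ∞) : WithTop ℕ∞) := WithTop.coe_le_coe.2 le_top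
    have i1 : ‖iteratedFDeriv ℝ n (dirD (1, 0) H) p‖ ≤ 2 ^ n * M := by
      refine ih hs1 fun j k hjk => ?_
      rw [dirD_iterate_comm _ _ _ hH, ← Function.iterate_succ_apply]
      exact hM (j + 1) k (by lia)
    have i2 : ‖iteratedFDeriv ℝ n (dirD (0, 1) H) p‖ ≤ 2 ^ n * M := by
      refine ih hs2 fun j k hjk => ?_
      rw [← Function.iterate_succ_apply]
      exact hM j (k + 1) (by lia)
    rw [← norm_iteratedFDeriv_fderiv, fderiv_eq_dirD, iteratedFDeriv_add_apply
      ((ContinuousLinearMap.contDiff _).comp (hs1.of_le hn)).contDiffAt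
      ((ContinuousLinearMap.contDiff _).comp (hs2.of_le hn)).contDiffAt]
    have l1 := ContinuousLinearMap.norm_iteratedFDeriv_comp_left
      (ContinuousLinearMap.smulRightL ℝ (ℝ × ℝ) ℂ (ContinuousLinearMap.fst ℝ ℝ ℝ))
      hs1.contDiffAt (x := p) hn
    have l2 := ContinuousLinearMap.norm_iteratedFDeriv_comp_left
      (ContinuousLinearMap.smulRightL ℝ (ℝ × ℝ) ℂ (ContinuousLinearMap.snd ℝ ℝ ℝ))
      hs2.contDiffAt (x := p) hn
    have m1 := mul_le_mul_of_nonneg_right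
      (norm_smulRightL_le _ (ContinuousLinearMap.norm_fst_le ℝ ℝ ℝ))
      (norm_nonneg (iteratedFDeriv ℝ n (dirD (1, 0) H) p))
    have m2 := mul_le_mul_of_nonneg_right
      (norm_smulRightL_le _ (ContinuousLinearMap.norm_snd_le ℝ ℝ ℝ))
      (norm_nonneg (iteratedFDeriv ℝ n (dirD (0, 1) H) p))
    refine (norm_add_le _ _).trans ?_
    rw [pow_succ]
    linarith

lemma iteratedDeriv_snd_eq (k : ℕ) {H : ℝ × ℝ → ℂ} (hH : ContDiff ℝ (⊤ : ℕ∞) H) (x y : ℝ) :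
    iteratedDeriv k (fun z => H (x, z)) y = (dirD (0, 1))^[k] H (x, y) := by
  induction k generalizing y with
  | zero => simp
  | succ k ih =>
    rw [iteratedDeriv_succ, funext ih, Function.iterate_succ_apply']
    have h := ((dirD_iterate_smooth (0, 1) k hH).differentiable (by simp) (x, y)).hasFDerivAt
    exact (h.comp_hasDerivAt y ((hasDerivAt_const y x).prodMk (hasDerivAt_id y))).deriv

lemma iteratedDeriv_fst_eq (k : ℕ) {H : ℝ × ℝ → ℂ} (hH : ContDiff ℝ (⊤ : ℕ∞) H) (x y : ℝ) :
    iteratedDeriv k (fun z => H (z, y)) x = (dirD (1, 0))^[k] H (x, y) := by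
  induction k generalizing x with
  | zero => simp
  | succ k ih =>
    rw [iteratedDeriv_succ, funext ih, Function.iterate_succ_apply']
    have h := ((dirD_iterate_smooth (1, 0) k hH).differentiable (by simp) (x, y)).hasFDerivAt
    exact (h.comp_hasDerivAt x ((hasDerivAt_id x).prodMk (hasDerivAt_const x y))).deriv

/-! ### Derivatives along the coordinate curves -/

lemma norm_iteratedDeriv_radial (c s : ℝ) (i : ℕ) (u : ℝ) :
    ‖iteratedDeriv i (fun u : ℝ => (Real.exp u * c, Real.exp u * s)) u‖ ≤
      ‖(Real.exp u * c, Real.exp u * s)‖ := by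
  have h : iteratedDeriv i (fun u : ℝ => (Real.exp u * c, Real.exp u * s)) =
      fun u : ℝ => (Real.exp u * c, Real.exp u * s) := by
    induction i with
    | zero => simp
    | succ i ih =>
      rw [iteratedDeriv_succ, ih]
      ext1 u
      exact (((Real.hasDerivAt_exp u).mul_const c).prodMk
        ((Real.hasDerivAt_exp u).mul_const s)).deriv
  rw [h]

lemma norm_iteratedDeriv_angular (r : ℝ) (i : ℕ) (a : ℝ) :
    ‖iteratedDeriv i (fun a : ℝ => (r * Real.cosh a, r * Real.sinh a)) a‖ ≤
      ‖(r * Real.cosh a, r * Real.sinh a)‖ := by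
  have h : iteratedDeriv i (fun a : ℝ => (r * Real.cosh a, r * Real.sinh a)) =
      (fun a : ℝ => (r * Real.cosh a, r * Real.sinh a)) ∨
      iteratedDeriv i (fun a : ℝ => (r * Real.cosh a, r * Real.sinh a)) =
      (fun a : ℝ => (r * Real.sinh a, r * Real.cosh a)) := by
    induction i with
    | zero => simp
    | succ i ih =>
      rw [iteratedDeriv_succ]
      rcases ih with ih | ih
      · right
        rw [ih]
        ext1 u
        exact (((Real.hasDerivAt_cosh u).const_mul r).prodMk
          ((Real.hasDerivAt_sinh u).const_mul r)).deriv
      · left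
        rw [ih]
        ext1 u
        exact (((Real.hasDerivAt_sinh u).const_mul r).prodMk
          ((Real.hasDerivAt_cosh u).const_mul r)).deriv
  rcases h with h | h
  · rw [h]
  · rw [h, Prod.norm_mk, Prod.norm_mk, max_comm]

/-- Faà di Bruno bound along a curve all of whose derivatives are dominated by its position.
Away from the closed support of `H` the derivatives vanish, and on it the curve is bounded
by `η⁻¹`. -/
lemma norm_iteratedDeriv_comp_curve {η : ℝ} (hη : 0 < η) (hη1 : η < 1) {H : ℝ × ℝ → ℂ}
    (hH : ContDiff ℝ (⊤ : ℕ∞) H)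
    (hsupp : Function.support H ⊆ (Set.Ioo η η⁻¹) ×ˢ (Set.Ioo η η⁻¹))
    {γ : ℝ → ℝ × ℝ} (hγ : ContDiff ℝ (⊤ : ℕ∞) γ)
    (hγ' : ∀ i x, ‖iteratedDeriv i γ x‖ ≤ ‖γ x‖) (n : ℕ) (C : ℝ)
    (hC : ∀ i ≤ n, ∀ p, ‖iteratedFDeriv ℝ i H p‖ ≤ C) (x : ℝ) :
    ‖iteratedDeriv n (H ∘ γ) x‖ ≤ n.factorial * C * η⁻¹ ^ n := by
  have hC0 : 0 ≤ C := (norm_nonneg _).trans (hC 0 (Nat.zero_le _) 0)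
  have hη2 : 1 ≤ η⁻¹ := (one_le_inv₀ hη).2 hη1.le
  rw [← norm_iteratedFDeriv_eq_norm_iteratedDeriv]
  by_cases hx : γ x ∈ tsupport H
  · have hbox : tsupport H ⊆ (Set.Icc η η⁻¹) ×ˢ (Set.Icc η η⁻¹) :=
      closure_minimal (hsupp.trans (Set.prod_mono Set.Ioo_subset_Icc_self
        Set.Ioo_subset_Icc_self)) (isClosed_Icc.prod isClosed_Icc)
    obtain ⟨⟨h1, h2⟩, h3, h4⟩ := hbox hx
    have hnorm : ‖γ x‖ ≤ η⁻¹ := by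
      rw [Prod.norm_def, Real.norm_of_nonneg (hη.le.trans h1), Real.norm_of_nonneg (hη.le.trans h3)]
      exact max_le h2 h4
    refine norm_iteratedFDeriv_comp_le hH hγ (WithTop.coe_le_coe.2 le_top) x
      (fun i hi => hC i hi _) fun i hi1 hi2 => ?_
    rw [norm_iteratedFDeriv_eq_norm_iteratedDeriv]
    exact ((hγ' i x).trans hnorm).trans (le_self_pow₀ hη2 (by lia))
  · have h0 : iteratedFDeriv ℝ n (H ∘ γ) x = 0 := by
      by_contra h
      exact hx (tsupport_comp_subset_preimage H hγ.continuous
        (support_iteratedFDeriv_subset (𝕜 := ℝ) n h))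
    rw [h0, norm_zero]
    positivity

/-! ### Oscillatory integrals -/

lemma one_dim_bound {g : ℝ → ℂ} (hg : ContDiff ℝ (⊤ : ℕ∞) g) {a b : ℝ} (hab : a ≤ b)
    (hsupp : Function.support g ⊆ Set.Icc a b) (n : ℕ) (B : ℝ)
    (hB : ∀ x, ‖iteratedDeriv n g x‖ ≤ B) (s : ℝ) :
    |s| ^ n * ‖∫ x, g x * Complex.exp (s * x * Complex.I)‖ ≤ B * (b - a) := by
  have hts : tsupport g ⊆ Set.Icc a b := closure_minimal hsupp isClosed_Icc
  have hcs : HasCompactSupport g := HasCompactSupport.of_support_subset_isCompact isCompact_Icc hsupp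
  have hsub : ∀ m : ℕ, Function.support (iteratedDeriv m g) ⊆ Set.Icc a b := fun m => by
    refine Set.Subset.trans (fun x hx => ?_) hts
    refine support_iteratedFDeriv_subset (𝕜 := ℝ) m (f := g) ?_
    rw [Function.mem_support, ← norm_ne_zero_iff, norm_iteratedFDeriv_eq_norm_iteratedDeriv]
    exact norm_ne_zero_iff.2 hx
  have hint : ∀ m : ℕ, Integrable (iteratedDeriv m g) := fun m =>
    (hg.continuous_iteratedDeriv m (WithTop.coe_le_coe.2 le_top)).integrable_of_hasCompactSupport
      (HasCompactSupport.of_support_subset_isCompact isCompact_Icc (hsub m))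
  have hF := congrFun (Real.fourier_iteratedDeriv (n := n) hg (fun m _ => hint m) le_top)
    (-s / (2 * Real.pi))
  have hpi := Real.pi_pos
  rw [Real.fourier_real_eq_integral_exp_smul, Real.fourier_real_eq_integral_exp_smul] at hF
  have e1 : ∫ x, g x * Complex.exp (s * x * Complex.I) =
      ∫ v : ℝ, Complex.exp (↑(-2 * Real.pi * v * (-s / (2 * Real.pi))) * Complex.I) • g v := by
    congr 1 with v
    rw [smul_eq_mul, mul_comm]
    congr 3
    rw [← Complex.ofReal_mul]
    congr 1
    field_simp
  have e2 : |s| ^ n * ‖∫ x, g x * Complex.exp (s * x * Complex.I)‖ =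
      ‖∫ v : ℝ, Complex.exp (↑(-2 * Real.pi * v * (-s / (2 * Real.pi))) * Complex.I) •
        iteratedDeriv n g v‖ := by
    rw [hF, e1, norm_smul, norm_pow]
    congr 2
    simp only [norm_mul, Complex.norm_real, Complex.norm_I, Real.norm_eq_abs, abs_div, abs_neg,
      abs_of_pos hpi, abs_mul, Complex.norm_ofNat, Nat.abs_ofNat]
    field_simp
  rw [e2, ← setIntegral_eq_integral_of_forall_compl_eq_zero (s := Set.Icc a b)]
  · refine (norm_setIntegral_le_of_norm_le_const (C := B) measure_Icc_lt_top fun x _ => ?_).trans ?_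
    · rw [norm_smul, Complex.norm_exp_ofReal_mul_I, one_mul]
      exact hB x
    · rw [Real.volume_real_Icc_of_le hab]
  · intro x hx
    rw [Function.notMem_support.1 fun h => hx (hsub n h), smul_zero]

/-- `n` integrations by parts in `x` for an integrand supported in the strip `p ≤ x + y ≤ q`,
`|y| ≤ W`. The factor `φ` stands for the remaining phase in `y`. -/
lemma oscillatory_bound {G : ℝ → ℝ → ℂ} (hG : ∀ y, ContDiff ℝ (⊤ : ℕ∞) (fun x => G x y))
    {p q W : ℝ} (hpq : p ≤ q) (hW : 0 ≤ W)
    (hsupp : ∀ x y, G x y ≠ 0 → |y| ≤ W ∧ p ≤ x + y ∧ x + y ≤ q) (n : ℕ) (B : ℝ)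
    (hB : ∀ x y, ‖iteratedDeriv n (fun x => G x y) x‖ ≤ B) (s : ℝ)
    (φ : ℝ → ℂ) (hφ : ∀ y, ‖φ y‖ = 1) :
    |s| ^ n * ‖∫ y, φ y * ∫ x, G x y * Complex.exp (s * x * Complex.I)‖ ≤
      B * (q - p) * (2 * W) := by
  rw [← setIntegral_eq_integral_of_forall_compl_eq_zero (s := Set.Icc (-W) W)]
  · have h := norm_setIntegral_le_of_norm_le_const (μ := volume) (s := Set.Icc (-W) W)
      (f := fun y => (|s| ^ n : ℂ) * (φ y * ∫ x, G x y * Complex.exp (s * x * Complex.I)))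
      (C := B * (q - p)) measure_Icc_lt_top (fun y _ => by
        have h1 := one_dim_bound (hG y) (a := p - y) (b := q - y) (by linarith)
          (fun x hx => by
            obtain ⟨_, h2, h3⟩ := hsupp x y hx
            exact ⟨by linarith, by linarith⟩) n B (fun x => hB x y) s
        rw [norm_mul, norm_mul, hφ, one_mul, norm_pow, Complex.norm_real, Real.norm_eq_abs, abs_abs]
        calc _ ≤ _ := h1
          _ = _ := by ring)
    rw [integral_const_mul, norm_mul, norm_pow, Complex.norm_real, Real.norm_eq_abs, abs_abs,
      Real.volume_real_Icc_of_le (by linarith)] at h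
    calc _ ≤ _ := h
      _ = _ := by ring
  · intro y hy
    have : ∀ x, G x y = 0 := fun x => by
      by_contra h
      exact hy (abs_le.1 (hsupp x y h).1)
    simp [this]

/-! ### Hyperbolic coordinates -/

/-- The support of `F` in the coordinates `(u, α)`, `r = e^u`: here `e^{u+α} = x₁ + x₂` and
`e^{2u} = x₁² - x₂²`. -/
lemma support_bounds {η δ₀ u a : ℝ} (hη : 0 < η) (hη1 : η < 1) (hδ₀ : 0 < δ₀) (hδ₁ : δ₀ < 1)
    (h1 : Real.exp u * Real.cosh a ∈ Set.Ioo η η⁻¹)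
    (h2 : Real.exp u * Real.sinh a ∈ Set.Ioo η η⁻¹)
    (h3 : δ₀ < (Real.exp u * Real.cosh a) ^ 2 - (Real.exp u * Real.sinh a) ^ 2) :
    |u| ≤ (2 * -Real.log η + 1) * (1 + |Real.log δ₀|) ∧
    |a| ≤ (2 * -Real.log η + 1) * (1 + |Real.log δ₀|) ∧
    Real.log η ≤ u + a ∧ u + a ≤ -Real.log η + 1 := by
  have hl : Real.log η < 0 := Real.log_neg hη hη1
  have hm : Real.log δ₀ < 0 := Real.log_neg hδ₀ hδ₁
  have ev : Real.exp u * Real.cosh a + Real.exp u * Real.sinh a = Real.exp (u + a) := by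
    rw [← mul_add, Real.cosh_add_sinh, Real.exp_add]
  have eu : (Real.exp u * Real.cosh a) ^ 2 - (Real.exp u * Real.sinh a) ^ 2 = Real.exp (2 * u) := by
    rw [two_mul u, Real.exp_add, mul_pow, mul_pow, ← mul_sub, Real.cosh_sq_sub_sinh_sq]
    ring
  have v1 : Real.log η ≤ u + a := by
    rw [Real.log_le_iff_le_exp hη, ← ev]
    linarith [h1.1, h2.1]
  have v2 : u + a ≤ -Real.log η + 1 := by
    rw [← Real.exp_le_exp, Real.exp_add (-Real.log η), Real.exp_neg, Real.exp_log hη, ← ev]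
    have := Real.add_one_le_exp (1 : ℝ)
    have h0 : 0 < η⁻¹ := inv_pos.2 hη
    nlinarith [h1.2, h2.2]
  have u1 : Real.log δ₀ ≤ 2 * u := by
    rw [Real.log_le_iff_le_exp hδ₀, ← eu]
    exact h3.le
  have u2 : u ≤ -Real.log η := by
    rw [← Real.exp_le_exp, Real.exp_neg, Real.exp_log hη]
    have := Real.one_le_cosh a
    nlinarith [h1.2, Real.exp_pos u]
  rw [abs_of_neg hm]
  have hprod : 0 ≤ Real.log η * Real.log δ₀ := (mul_pos_of_neg_of_neg hl hm).le
  refine ⟨abs_le.2 ⟨?_, ?_⟩, abs_le.2 ⟨?_, ?_⟩, v1, v2⟩ <;> nlinarith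

/-- The Mellin integral in `r` becomes a Fourier integral under `r = e^u`. -/
lemma mellin_to_fourier (f : ℝ → ℂ) (t : ℝ) :
    ∫ r in Set.Ioi (0 : ℝ), f r * (r : ℂ) ^ (Complex.I * (t : ℂ)) / (r : ℂ) =
      ∫ u : ℝ, f (Real.exp u) * Complex.exp (t * u * Complex.I) := by
  have him : Real.exp '' Set.univ = Set.Ioi 0 := by rw [Set.image_univ, Real.range_exp]
  rw [← him, integral_image_eq_integral_abs_deriv_smul MeasurableSet.univ
    (fun x _ => (Real.hasDerivAt_exp x).hasDerivWithinAt) Real.exp_injective.injOn,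
    Measure.restrict_univ]
  congr 1 with u
  have h0 : (Real.exp u : ℂ) ≠ 0 := by exact_mod_cast (Real.exp_pos u).ne'
  rw [abs_of_pos (Real.exp_pos u), Complex.real_smul, Complex.cpow_def_of_ne_zero h0,
    ← Complex.ofReal_log (Real.exp_pos u).le, Real.log_exp, mul_div_cancel₀ _ h0]
  congr 2
  ring

lemma add_add_pow_le (J : ℕ) {b c : ℝ} (hb : 0 ≤ b) (hc : 0 ≤ c) :
    (1 + b + c) ^ J ≤ 3 ^ J * (1 + b ^ J + c ^ J) := by
  have key : ∀ m, 0 ≤ m → 1 + b + c ≤ 3 * m → m ^ J ≤ 1 + b ^ J + c ^ J →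
      (1 + b + c) ^ J ≤ 3 ^ J * (1 + b ^ J + c ^ J) := fun m hm h1 h2 => by
    calc (1 + b + c) ^ J ≤ (3 * m) ^ J := by gcongr
      _ = 3 ^ J * m ^ J := mul_pow _ _ _
      _ ≤ _ := by gcongr
  have hbJ := pow_nonneg hb J
  have hcJ := pow_nonneg hc J
  rcases le_total b c with h | h
  · rcases le_total 1 c with h' | h'
    · exact key c hc (by linarith) (by linarith)
    · exact key 1 zero_le_one (by linarith) (by rw [one_pow]; linarith)
  · rcases le_total 1 b with h' | h'
    · exact key b hb (by linarith) (by linarith)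
    · exact key 1 zero_le_one (by linarith) (by rw [one_pow]; linarith)

/-! ### The two families of estimates -/

/-- The bound after `n` integrations by parts, in `u` (paired with `t`) or in `α` (paired with
`a`). With `n = 0` it is the trivial bound. -/
lemma fourier_decay {η : ℝ} (hη : 0 < η) (hη1 : η < 1) (CF : ℕ → ℕ → ℝ) (n : ℕ)
    {δ δ₀ : ℝ} (hδ : 0 < δ) (hδ1 : δ < 1) (hδ₀ : 0 < δ₀) (hδ₁ : δ₀ < 1) {F : ℝ → ℝ → ℂ}
    (hF : ContDiff ℝ (⊤ : ℕ∞) (fun p : ℝ × ℝ => F p.1 p.2))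
    (hsupp : Function.support (fun p : ℝ × ℝ => F p.1 p.2) ⊆
      (Set.Ioo η η⁻¹) ×ˢ (Set.Ioo η η⁻¹))
    (hzero : ∀ x₁ x₂ : ℝ, x₁ ^ 2 - x₂ ^ 2 ≤ δ₀ → F x₁ x₂ = 0)
    (hbd : ∀ (J₁ J₂ : ℕ) (x₁ x₂ : ℝ),
      ‖iteratedDeriv J₁ (fun y₁ => iteratedDeriv J₂ (fun y₂ => F y₁ y₂) x₂) x₁‖
        ≤ CF J₁ J₂ * δ ^ (-(J₁ + J₂ : ℝ))) (a t : ℝ) (b : ℝ) (hb : b = t ∨ b = a) :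
    |δ * b| ^ n * ‖∫ α : ℝ, Complex.exp (a * α * Complex.I) * ∫ u : ℝ,
        F (Real.exp u * Real.cosh α) (Real.exp u * Real.sinh α) *
          Complex.exp (t * u * Complex.I)‖ ≤
      n.factorial * (2 ^ n * ∑ j ∈ Finset.range (n + 1), ∑ k ∈ Finset.range (n + 1), |CF j k|) *
        η⁻¹ ^ n * (2 * -Real.log η + 1) * (2 * (2 * -Real.log η + 1)) * (1 + |Real.log δ₀|) := by
  set S := ∑ j ∈ Finset.range (n + 1), ∑ k ∈ Finset.range (n + 1), |CF j k| with hS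
  set H : ℝ × ℝ → ℂ := fun p => F p.1 p.2 with hHdef
  set W := (2 * -Real.log η + 1) * (1 + |Real.log δ₀|) with hWdef
  have hl : Real.log η < 0 := Real.log_neg hη hη1
  have hW : 0 ≤ W := mul_nonneg (by linarith) (by positivity)
  have hS0 : 0 ≤ S := Finset.sum_nonneg fun _ _ => Finset.sum_nonneg fun _ _ => abs_nonneg _
  have hδi : 1 ≤ δ⁻¹ := (one_le_inv₀ hδ).2 hδ1.le
  -- all mixed partials of order at most `n` are at most `S δ^{-n}`
  have hpart : ∀ j k, j + k ≤ n → ∀ p,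
      ‖(dirD (1, 0))^[j] ((dirD (0, 1))^[k] H) p‖ ≤ S * δ⁻¹ ^ n := by
    intro j k hjk p
    have h := hbd j k p.1 p.2
    have e : (fun y₁ => iteratedDeriv k (fun y₂ => F y₁ y₂) p.2) =
        fun y₁ => (dirD (0, 1))^[k] H (y₁, p.2) :=
      funext fun y₁ => iteratedDeriv_snd_eq k hF y₁ p.2
    rw [e, iteratedDeriv_fst_eq j (dirD_iterate_smooth _ k hF)] at h
    refine h.trans ?_
    have e2 : δ ^ (-(j + k : ℝ)) = δ⁻¹ ^ (j + k) := by
      rw [Real.rpow_neg hδ.le, ← Nat.cast_add, Real.rpow_natCast, inv_pow]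
    rw [e2]
    have hle : |CF j k| ≤ S := by
      refine le_trans ?_ (Finset.single_le_sum
        (f := fun j => ∑ k ∈ Finset.range (n + 1), |CF j k|)
        (fun _ _ => Finset.sum_nonneg fun _ _ => abs_nonneg _)
        (Finset.mem_range.2 (show j < n + 1 by lia)))
      exact Finset.single_le_sum (f := fun k => |CF j k|) (fun _ _ => abs_nonneg _)
        (Finset.mem_range.2 (show k < n + 1 by lia))
    exact mul_le_mul ((le_abs_self _).trans hle) (pow_le_pow_right₀ hδi hjk) (by positivity) hS0
  have hfd : ∀ i ≤ n, ∀ p, ‖iteratedFDeriv ℝ i H p‖ ≤ 2 ^ n * (S * δ⁻¹ ^ n) := by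
    intro i hi p
    refine (norm_iteratedFDeriv_le_of_partials i hF p (S * δ⁻¹ ^ n)
      fun j k hjk => hpart j k (hjk.trans hi) p).trans ?_
    gcongr
    norm_num
  set B := n.factorial * (2 ^ n * (S * δ⁻¹ ^ n)) * η⁻¹ ^ n with hBdef
  have hgeom : ∀ u α, F (Real.exp u * Real.cosh α) (Real.exp u * Real.sinh α) ≠ 0 →
      |u| ≤ W ∧ |α| ≤ W ∧ Real.log η ≤ u + α ∧ u + α ≤ -Real.log η + 1 := by
    intro u α h
    have hbox := hsupp (show (Real.exp u * Real.cosh α, Real.exp u * Real.sinh α) ∈ _ from h)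
    exact support_bounds hη hη1 hδ₀ hδ₁ hbox.1 hbox.2
      (not_le.1 fun h' => h (hzero _ _ h'))
  have hrad : ∀ α, ContDiff ℝ (⊤ : ℕ∞)
      (fun u : ℝ => (Real.exp u * Real.cosh α, Real.exp u * Real.sinh α)) := fun α => by fun_prop
  have hang : ∀ u, ContDiff ℝ (⊤ : ℕ∞)
      (fun α : ℝ => (Real.exp u * Real.cosh α, Real.exp u * Real.sinh α)) := fun u =>
    (contDiff_const.mul Real.contDiff_cosh).prodMk (contDiff_const.mul Real.contDiff_sinh)
  have hphase : ∀ c x : ℝ, ‖Complex.exp (c * x * Complex.I)‖ = 1 := fun c x => by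
    rw [← Complex.ofReal_mul, Complex.norm_exp_ofReal_mul_I]
  -- undo the scaling of the frequency by `δ`
  have hscale : ∀ X : ℝ, |b| ^ n * X ≤ B * (-Real.log η + 1 - Real.log η) * (2 * W) →
      |δ * b| ^ n * X ≤ n.factorial * (2 ^ n * S) * η⁻¹ ^ n * (2 * -Real.log η + 1) *
        (2 * (2 * -Real.log η + 1)) * (1 + |Real.log δ₀|) := by
    intro X hX
    have h1 : δ ^ n * δ⁻¹ ^ n = 1 := by rw [← mul_pow, mul_inv_cancel₀ hδ.ne', one_pow]
    calc |δ * b| ^ n * X = δ ^ n * (|b| ^ n * X) := by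
          rw [abs_mul, abs_of_pos hδ, mul_pow, mul_assoc]
      _ ≤ δ ^ n * (B * (-Real.log η + 1 - Real.log η) * (2 * W)) := by gcongr
      _ = (δ ^ n * δ⁻¹ ^ n) * (n.factorial * (2 ^ n * S) * η⁻¹ ^ n * (2 * -Real.log η + 1) *
        (2 * (2 * -Real.log η + 1)) * (1 + |Real.log δ₀|)) := by
          rw [hBdef, hWdef]
          ring
      _ = _ := by rw [h1, one_mul]
  apply hscale
  rcases hb with rfl | rfl
  · exact oscillatory_bound
      (G := fun u α => F (Real.exp u * Real.cosh α) (Real.exp u * Real.sinh α))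
      (fun α => hF.comp (hrad α)) (by linarith) hW (fun u α h => (hgeom u α h).2) n B
      (fun u α => norm_iteratedDeriv_comp_curve hη hη1 hF hsupp (hrad α)
        (norm_iteratedDeriv_radial _ _) n _ hfd u) b _ (hphase a)
  · have hcont : Continuous (Function.uncurry fun α u : ℝ => Complex.exp (b * α * Complex.I) *
        (F (Real.exp u * Real.cosh α) (Real.exp u * Real.sinh α) *
          Complex.exp (t * u * Complex.I))) := by
      have h1 : Continuous fun p : ℝ × ℝ =>
          H (Real.exp p.2 * Real.cosh p.1, Real.exp p.2 * Real.sinh p.1) :=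
        hF.continuous.comp (((Real.continuous_exp.comp continuous_snd).mul
          (Real.continuous_cosh.comp continuous_fst)).prodMk
          ((Real.continuous_exp.comp continuous_snd).mul
          (Real.continuous_sinh.comp continuous_fst)))
      have h2 : Continuous fun p : ℝ × ℝ => Complex.exp (b * p.1 * Complex.I) := by fun_prop
      have h3 : Continuous fun p : ℝ × ℝ => Complex.exp (t * p.2 * Complex.I) := by fun_prop
      exact h2.mul (h1.mul h3)
    have hint : Integrable (Function.uncurry fun α u : ℝ => Complex.exp (b * α * Complex.I) *
        (F (Real.exp u * Real.cosh α) (Real.exp u * Real.sinh α) *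
          Complex.exp (t * u * Complex.I))) (volume.prod volume) := by
      refine hcont.integrable_of_hasCompactSupport
        (HasCompactSupport.of_support_subset_isCompact
          ((isCompact_Icc (a := -W) (b := W)).prod (isCompact_Icc (a := -W) (b := W))) ?_)
      rintro ⟨α, u⟩ hp
      have hne : F (Real.exp u * Real.cosh α) (Real.exp u * Real.sinh α) ≠ 0 := fun h =>
        hp (by simp [Function.uncurry, h])
      obtain ⟨h1, h2, _⟩ := hgeom u α hne
      exact ⟨abs_le.1 h2, abs_le.1 h1⟩
    have hswap : ∫ α : ℝ, Complex.exp (b * α * Complex.I) * ∫ u : ℝ,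
        F (Real.exp u * Real.cosh α) (Real.exp u * Real.sinh α) *
          Complex.exp (t * u * Complex.I) =
        ∫ u : ℝ, Complex.exp (t * u * Complex.I) * ∫ α : ℝ,
        F (Real.exp u * Real.cosh α) (Real.exp u * Real.sinh α) *
          Complex.exp (b * α * Complex.I) := by
      simp_rw [← integral_const_mul]
      rw [integral_integral_swap hint]
      congr 1 with u
      congr 1 with α
      ring
    rw [hswap]
    refine oscillatory_bound
      (G := fun α u => F (Real.exp u * Real.cosh α) (Real.exp u * Real.sinh α))
      (fun u => hF.comp (hang u)) (by linarith) hW (fun α u h => ?_) n B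
      (fun α u => norm_iteratedDeriv_comp_curve hη hη1 hF hsupp (hang u)
        (norm_iteratedDeriv_angular _) n _ hfd α) b _ (hphase t)
    obtain ⟨h1, _, h2, h3⟩ := hgeom u α h
    exact ⟨h1, by linarith, by linarith⟩

/-- decay of hyperbolic Fourier–Mellin coefficients: Let
`η, δ, δ₀ ∈ (0,1)` and `R > 0`.  Let `F : ℝ² → ℂ` be smooth, supported in
`(η, 1/η)²`, vanishing where `x₁² − x₂² ≤ δ₀`, with
`|∂^{J₁}_{x₁}∂^{J₂}_{x₂}F| ≤ C_{J₁,J₂} δ^{-J₁-J₂}`.  Then for every `J` there is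
`C` (depending only on `η`, `J`, and the `C_{J₁,J₂}`) such that for all `ℓ ∈ ℤ`,
`t ∈ ℝ`:
`|∫_ℝ ∫_0^∞ F(r cosh α, r sinh α) e^{-2πiℓα/R} r^{it} dr/r dα|
  ≤ C (1 + |log δ₀|)/(1 + δ|ℓ|/R + δ|t|)^J`. -/
theorem stmt_11 (η : ℝ) (hη : 0 < η) (hη1 : η < 1) (CF : ℕ → ℕ → ℝ) (J : ℕ) :
    ∃ C : ℝ, 0 < C ∧
      ∀ δ δ₀ R : ℝ, 0 < δ → δ < 1 → 0 < δ₀ → δ₀ < 1 → 0 < R →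
      ∀ F : ℝ → ℝ → ℂ,
        ContDiff ℝ (⊤ : ℕ∞) (fun p : ℝ × ℝ => F p.1 p.2) →
        (Function.support (fun p : ℝ × ℝ => F p.1 p.2) ⊆
          (Set.Ioo η η⁻¹) ×ˢ (Set.Ioo η η⁻¹)) →
        (∀ x₁ x₂ : ℝ, x₁ ^ 2 - x₂ ^ 2 ≤ δ₀ → F x₁ x₂ = 0) →
        (∀ (J₁ J₂ : ℕ) (x₁ x₂ : ℝ),
          ‖iteratedDeriv J₁ (fun y₁ => iteratedDeriv J₂ (fun y₂ => F y₁ y₂) x₂) x₁‖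
            ≤ CF J₁ J₂ * δ ^ (-(J₁ + J₂ : ℝ))) →
      ∀ (ℓ : ℤ) (t : ℝ),
        ‖∫ α : ℝ, ∫ r in Set.Ioi (0 : ℝ),
            F (r * Real.cosh α) (r * Real.sinh α) *
              Complex.exp (-(2 * Real.pi * ((ℓ : ℝ) * α / R)) * Complex.I) *
              (r : ℂ) ^ (Complex.I * (t : ℂ)) / (r : ℂ)‖
          ≤ C * (1 + |Real.log δ₀|) / (1 + δ * |(ℓ : ℝ)| / R + δ * |t|) ^ J := by
  have hl : Real.log η < 0 := Real.log_neg hη hη1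
  -- the constant that `fourier_decay` gives for `n` integrations by parts
  obtain ⟨K, hK⟩ : ∃ K : ℕ → ℝ, ∀ n, K n =
      n.factorial * (2 ^ n * ∑ j ∈ Finset.range (n + 1), ∑ k ∈ Finset.range (n + 1), |CF j k|) *
        η⁻¹ ^ n * (2 * -Real.log η + 1) * (2 * (2 * -Real.log η + 1)) := ⟨_, fun _ => rfl⟩
  have hK0 : ∀ n, 0 ≤ K n := fun n => by
    have h1 : 0 ≤ 2 * -Real.log η + 1 := by linarith
    have h2 : 0 ≤ ∑ j ∈ Finset.range (n + 1), ∑ k ∈ Finset.range (n + 1), |CF j k| :=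
      Finset.sum_nonneg fun _ _ => Finset.sum_nonneg fun _ _ => abs_nonneg _
    rw [hK]
    positivity
  refine ⟨3 ^ J * (K 0 + 2 * K J) + 1, by have := hK0 0; have := hK0 J; positivity, ?_⟩
  intro δ δ₀ R hδ hδ1 hδ₀ hδ₁ hR F hF hsupp hzero hbd ℓ t
  set a : ℝ := -(2 * Real.pi * ((ℓ : ℝ) / R)) with ha
  have hI : ∫ α : ℝ, ∫ r in Set.Ioi (0 : ℝ),
            F (r * Real.cosh α) (r * Real.sinh α) *
              Complex.exp (-(2 * Real.pi * ((ℓ : ℝ) * α / R)) * Complex.I) *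
              (r : ℂ) ^ (Complex.I * (t : ℂ)) / (r : ℂ) =
      ∫ α : ℝ, Complex.exp (a * α * Complex.I) * ∫ u : ℝ,
        F (Real.exp u * Real.cosh α) (Real.exp u * Real.sinh α) *
          Complex.exp (t * u * Complex.I) := by
    congr 1 with α
    rw [mellin_to_fourier (fun r => F (r * Real.cosh α) (r * Real.sinh α) *
      Complex.exp (-(2 * Real.pi * ((ℓ : ℝ) * α / R)) * Complex.I)), ← integral_const_mul]
    congr 1 with u
    have e : (-(2 * Real.pi * ((ℓ : ℝ) * α / R)) * Complex.I : ℂ) = a * α * Complex.I := by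
      rw [ha]
      push_cast
      ring
    rw [e]
    ring
  rw [hI]
  have d0 := fourier_decay hη hη1 CF 0 hδ hδ1 hδ₀ hδ₁ hF hsupp hzero hbd a t t (Or.inl rfl)
  have d1 := fourier_decay hη hη1 CF J hδ hδ1 hδ₀ hδ₁ hF hsupp hzero hbd a t t (Or.inl rfl)
  have d2 := fourier_decay hη hη1 CF J hδ hδ1 hδ₀ hδ₁ hF hsupp hzero hbd a t a (Or.inr rfl)
  rw [← hK] at d0 d1 d2
  rw [pow_zero, one_mul] at d0
  set I := ‖∫ α : ℝ, Complex.exp (a * α * Complex.I) * ∫ u : ℝ,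
        F (Real.exp u * Real.cosh α) (Real.exp u * Real.sinh α) *
          Complex.exp (t * u * Complex.I)‖
  have hI0 : 0 ≤ I := norm_nonneg _
  set X := 1 + |Real.log δ₀|
  have hX : 0 ≤ X := by positivity
  have hb : 0 ≤ δ * |(ℓ : ℝ)| / R := by positivity
  have hc : 0 ≤ δ * |t| := by positivity
  have hat : |δ * t| = δ * |t| := by rw [abs_mul, abs_of_pos hδ]
  have hal : δ * |(ℓ : ℝ)| / R ≤ |δ * a| := by
    rw [abs_mul, abs_of_pos hδ, ha, abs_neg, abs_mul, abs_div, abs_of_pos hR,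
      abs_of_pos Real.two_pi_pos, mul_div_assoc]
    have hpi := Real.pi_gt_three
    have hq : 0 ≤ |(ℓ : ℝ)| / R := by positivity
    exact mul_le_mul_of_nonneg_left (by nlinarith) hδ.le
  rw [hat] at d1
  have d3 : (δ * |(ℓ : ℝ)| / R) ^ J * I ≤ K J * X :=
    le_trans (mul_le_mul_of_nonneg_right (pow_le_pow_left₀ hb hal J) hI0) d2
  rw [le_div_iff₀ (by positivity)]
  calc I * (1 + δ * |(ℓ : ℝ)| / R + δ * |t|) ^ J
      ≤ I * (3 ^ J * (1 + (δ * |(ℓ : ℝ)| / R) ^ J + (δ * |t|) ^ J)) := by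
        gcongr
        exact add_add_pow_le J hb hc
    _ = 3 ^ J * (I + (δ * |(ℓ : ℝ)| / R) ^ J * I + (δ * |t|) ^ J * I) := by ring
    _ ≤ 3 ^ J * (K 0 * X + K J * X + K J * X) := by gcongr
    _ ≤ (3 ^ J * (K 0 + 2 * K J) + 1) * X := by linarith
end
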